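/- arXiv:1604.02053 — 5 statements merged into one kernel-verified Lean document; each statement's English description precedes it below -/
import Mathlib

section
/- A priori moment bound for the nonlinearity-truncated scheme (Corollary 2.6, stated for a bounded diagonal operator, where all interpolation norms are the explicit eigenvalue-weighted norms): Assume the diagonal-operator setting. Let (Ω,F,P) be a probability space, let O : [0,T]×Ω → H be a stochastic process, let Y : [0,T]×Ω → H be a function, let F : H → H be continuous, let φ, Φ : H → [0,∞) be Borel measurable, and let ϕ ∈ [0,1), α ∈ [0,1/2], ρ ∈ [0,1−α), ϱ ∈ [ρ, ρ+1], θ, ϑ ∈ [0,∞), χ ∈ [0, (2−2α−2ρ)/(2+ϑ)], T ∈ (0,∞), h ∈ (0,1], p ∈ [2,∞) satisfy: (a) for all v, w ∈ H: ⟨v, F(v+w)⟩_H ≤ (1/2)φ(w)‖v‖_H² + ϕ‖v‖_{H_{1/2}}² + (1/2)Φ(w); (b) for all v, w ∈ H: ‖F(v) − F(w)‖_{H_{−1/2}}² ≤ θ·max{1, ‖v‖_{H_ϱ}^ϑ}·‖v−w‖_{H_ρ}² + θ·‖v−w‖_{H_ρ}^{2+ϑ}; (c) for all v ∈ H: ‖F(v)‖_{H_{−α}}²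 ≤ θ·max{1, ‖v‖_{H_ϱ}^{2+ϑ}}; and (d) for all t ∈ [0,T] and ω ∈ Ω: Y_t(ω) = ∫₀ᵗ e^{(t−s)A}·𝟙{‖Y_{⌊s⌋_h}(ω)‖_{H_ϱ} + ‖O_{⌊s⌋_h}(ω)‖_{H_ϱ} ≤ h^{−χ}}·F(Y_{⌊s⌋_h}(ω)) ds + O_t(ω) (Bochner integral, assumed to exist). Then Y − O : [0,T]×Ω → H is a stochastic process with continuous sample paths, and, with K := θ·(1+√θ)^{2+ϑ}·h^{min{2ϱ, 2−2α−ϑχ} − 2ρ − (2+ϑ)χ} / ((1/2 − ϕ/2)·(1−α−ρ)^{2+ϑ}), it holds that ‖ sup_{t∈[0,T]} ‖Y_t − O_t‖_H ‖_{L^p(P;ℝ)} ≤ ( ∫₀ᵀ ‖ exp(∫ₛᵀ φ(O_{⌊u⌋_h}) du)·[Φ(O_{⌊s⌋_h}) + K] ‖_{L^{p/2}(P;ℝ)} ds )^{1/2} ≤ ( (1+K)·∫₀ᵀ ( E[ exp((p/2)·∫ₛᵀ φ(O_{⌊u⌋_h}) du)·max{1, |Φ(O_{⌊s⌋_h})|^{p/2}}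 ] )^{2/p} ds )^{1/2}. -/
/-!
The drift part `X = Y - O` is the mild solution of `X' = A X + f` with `X 0 = 0`, where `f` is
constant on the cells `[kh, (k+1)h)` and equals `F (Y (kh))` there, or `0` when the truncation is
active. As `A` is bounded, `X` is continuous and right-differentiable, and on each cell it is given
by an explicit formula (`mild_properties`), which also yields measurability cell by cell.

Pathwise, with `w = O (kh)`, `d/dt ‖X‖² = -2 ‖X‖²_{H_{1/2}} + 2 ⟪X, f⟫`. If the truncation is active,
this is nonpositive. Otherwise `F (Y (kh))` is replaced by `F (X + w)`, to which the coercivity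
hypothesis applies; the remaining term is at most
`2 ‖X‖_{H_{1/2}} ‖F (Y (kh)) - F (X + w)‖_{H_{-1/2}}`, and Young's inequality absorbs it into
the unused part `2 (1 - ϕ) ‖X‖²_{H_{1/2}}` of the principal term as soon as the squared
`H_{-1/2}` norm is at most `(1 - ϕ) K`. That is `error_bound`: by the local Lipschitz hypothesis only
`X + w - Y (kh)` has to be estimated in `H_ρ`, and this vector is
`(e^{τA} - 1) (Y (kh) - w) + ∫₀^τ e^{sA} F (Y (kh)) ds` for some `τ ≤ h`. The scalar inequality
`1 - e^{-x} ≤ x^a` gives smoothing estimates for both summands, and the truncation bounds all norms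
involved by powers of `h^{-χ}`.

Hence `d/dt ‖X‖² ≤ φ(w) ‖X‖² + Φ(w) + K`, and Gronwall's inequality for step coefficients bounds
`sup_t ‖X_t‖²` by `∫₀ᵀ exp (∫ₛᵀ φ(O_{⌊u⌋})) (Φ(O_{⌊s⌋}) + K) ds` (`path_bound`). Minkowski's integral
inequality in `L^{p/2}` (`minkowski_integral`) turns this into the first moment bound; the second
follows from `Φ + K ≤ (1 + K) max 1 Φ`.
-/

open MeasureTheory Real RealInnerProductSpace ENNReal

/-- The eigenvalue-weighted interpolation norm `‖v‖_{H_r} = (Σᵢ λᵢ^{2r} ⟨bᵢ, v⟩²)^{1/2}`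
associated to the diagonal operator `A v = −Σᵢ λᵢ ⟨bᵢ, v⟩ bᵢ`. -/
noncomputable def diagNorm {I H : Type*} [NormedAddCommGroup H] [InnerProductSpace ℝ H]
    (b : I → H) (lam : I → ℝ) (r : ℝ) (v : H) : ℝ :=
  Real.sqrt (∑' i, lam i ^ (2 * r) * ⟪b i, v⟫ ^ 2)

/-- The semigroup `e^{tA} v = Σᵢ e^{−t λᵢ} ⟨bᵢ, v⟩ bᵢ` generated by the diagonal
operator `A v = −Σᵢ λᵢ ⟨bᵢ, v⟩ bᵢ`. -/
noncomputable def diagSemigroup {I H : Type*} [NormedAddCommGroup H]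
    [InnerProductSpace ℝ H] (b : I → H) (lam : I → ℝ) (t : ℝ) (v : H) : H :=
  ∑' i, (Real.exp (-(t * lam i)) * ⟪b i, v⟫) • b i

/-! ### Diagonal operators -/

section Diagonal

variable {I H : Type*} [NormedAddCommGroup H] [InnerProductSpace ℝ H]

lemma norm_sq_hasSum (b : HilbertBasis I ℝ H) (x : H) :
    HasSum (fun i => ⟪b i, x⟫ ^ 2) (‖x‖ ^ 2) := by
  have := b.hasSum_inner_mul_inner x x
  rw [real_inner_self_eq_norm_sq] at this
  refine this.congr_fun ?_
  intro i
  rw [real_inner_comm, sq]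

lemma norm_le_of_coord_le (b : HilbertBasis I ℝ H) {x y : H}
    (hxy : ∀ i, |⟪b i, x⟫| ≤ |⟪b i, y⟫|) : ‖x‖ ≤ ‖y‖ := by
  refine (sq_le_sq₀ (norm_nonneg _) (norm_nonneg _)).1 ?_
  exact hasSum_le (fun i => sq_le_sq.2 (hxy i)) (norm_sq_hasSum b x) (norm_sq_hasSum b y)

lemma eq_of_coord_eq (b : HilbertBasis I ℝ H) {x y : H}
    (hxy : ∀ i, ⟪b i, x⟫ = ⟪b i, y⟫) : x = y := by
  apply b.repr.injective
  ext i
  rw [b.repr_apply_apply, b.repr_apply_apply]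
  exact hxy i

/-- Every bounded real sequence is the sequence of eigenvalues of a bounded operator that is
diagonal with respect to `b`. -/
lemma exists_diagonal (b : HilbertBasis I ℝ H) (a : I → ℝ) (C : ℝ) (ha : ∀ i, |a i| ≤ C) :
    ∃ M : H →L[ℝ] H, ∀ i v, ⟪b i, M v⟫ = a i * ⟪b i, v⟫ := by
  have hmem : ∀ v : H, Memℓp (fun i => a i * b.repr v i) 2 := by
    intro v
    have h1 : Memℓp (fun i => C * b.repr v i) 2 := (lp.memℓp (b.repr v)).const_mul C
    refine memℓp_gen ?_
    refine Summable.of_nonneg_of_le (fun i => by positivity) (fun i => ?_) (h1.summable (by simp))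
    gcongr
    rw [norm_mul, norm_mul]
    gcongr
    exact (ha i).trans (le_abs_self C)
  let L : H →ₗ[ℝ] H :=
    { toFun := fun v => b.repr.symm ⟨fun i => a i * b.repr v i, hmem v⟩
      map_add' := fun v w => by
        rw [← map_add]
        congr 1
        ext i
        simp [mul_add]
        rfl
      map_smul' := fun c v => by
        rw [RingHom.id_apply, ← map_smul]
        congr 1
        ext i
        simp [mul_left_comm] }
  have hL : ∀ i v, ⟪b i, L v⟫ = a i * ⟪b i, v⟫ := by
    intro i v
    rw [← b.repr_apply_apply, ← b.repr_apply_apply]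
    simp [L]
  refine ⟨L.mkContinuous |C| fun v => ?_, hL⟩
  have h1 : ‖|C| • v‖ = |C| * ‖v‖ := by rw [norm_smul, Real.norm_eq_abs, abs_abs]
  rw [← h1]
  refine norm_le_of_coord_le b fun i => ?_
  rw [hL, inner_smul_right, abs_mul, abs_mul, abs_abs]
  exact mul_le_mul_of_nonneg_right ((ha i).trans (le_abs_self C)) (abs_nonneg _)

/-- The interpolation norm `‖·‖_{H_r}` is the norm of `H` precomposed with a bounded operator. -/
lemma exists_weight (b : HilbertBasis I ℝ H) (lam : I → ℝ)
    (hlam_lb : ∃ c : ℝ, 0 < c ∧ ∀ i, c ≤ lam i) (hlam_ub : ∃ C : ℝ, ∀ i, lam i ≤ C) (r : ℝ) :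
    ∃ D : H →L[ℝ] H, (∀ i v, ⟪b i, D v⟫ = lam i ^ r * ⟪b i, v⟫) ∧
      ∀ v, diagNorm (fun i => b i) lam r v = ‖D v‖ := by
  obtain ⟨c, hc, hcl⟩ := hlam_lb
  obtain ⟨C, hC⟩ := hlam_ub
  have hpos : ∀ i, 0 < lam i := fun i => hc.trans_le (hcl i)
  have hbd : ∀ i, |lam i ^ r| ≤ |c ^ r| + |C ^ r| := by
    intro i
    rw [abs_of_pos (Real.rpow_pos_of_pos (hpos i) r)]
    rcases le_total 0 r with hr | hr
    · have := Real.rpow_le_rpow (hpos i).le (hC i) hr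
      have := le_abs_self (C ^ r)
      have := abs_nonneg (c ^ r)
      linarith
    · have := Real.rpow_le_rpow_of_nonpos hc (hcl i) hr
      have := le_abs_self (c ^ r)
      have := abs_nonneg (C ^ r)
      linarith
  obtain ⟨D, hD⟩ := exists_diagonal b (fun i => lam i ^ r) _ hbd
  refine ⟨D, hD, fun v => ?_⟩
  rw [diagNorm, ← Real.sqrt_sq (norm_nonneg (D v)), ← (norm_sq_hasSum b (D v)).tsum_eq]
  congr 1
  refine tsum_congr fun i => ?_
  rw [hD, mul_pow, mul_comm 2 r, Real.rpow_mul (hpos i).le]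
  norm_cast

lemma inner_le_diagNorm_mul (b : HilbertBasis I ℝ H) (lam : I → ℝ)
    (hlam_lb : ∃ c : ℝ, 0 < c ∧ ∀ i, c ≤ lam i) (hlam_ub : ∃ C : ℝ, ∀ i, lam i ≤ C) (x y : H) :
    ⟪x, y⟫ ≤ diagNorm (fun i => b i) lam (1 / 2) x * diagNorm (fun i => b i) lam (-(1 / 2)) y := by
  obtain ⟨D, hD, hDn⟩ := exists_weight b lam hlam_lb hlam_ub (1 / 2)
  obtain ⟨E, hE, hEn⟩ := exists_weight b lam hlam_lb hlam_ub (-(1 / 2))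
  obtain ⟨c, hc, hcl⟩ := hlam_lb
  have : ⟪x, y⟫ = ⟪D x, E y⟫ := by
    rw [← b.tsum_inner_mul_inner x y, ← b.tsum_inner_mul_inner (D x) (E y)]
    refine tsum_congr fun i => ?_
    have hpos : 0 < lam i := hc.trans_le (hcl i)
    have h1 : lam i ^ (1 / 2 : ℝ) * lam i ^ (-(1 / 2) : ℝ) = 1 := by
      rw [← Real.rpow_add hpos]
      simp
    rw [real_inner_comm, real_inner_comm (b i) (D x), hD, hE]
    linear_combination -(⟪b i, x⟫ * ⟪b i, y⟫) * h1
  rw [this, hDn, hEn]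
  exact real_inner_le_norm _ _

lemma diagNorm_nonneg (b : I → H) (lam : I → ℝ) (r : ℝ) (v : H) : 0 ≤ diagNorm b lam r v :=
  Real.sqrt_nonneg _

lemma diagNorm_continuous (b : HilbertBasis I ℝ H) (lam : I → ℝ)
    (hlam_lb : ∃ c : ℝ, 0 < c ∧ ∀ i, c ≤ lam i) (hlam_ub : ∃ C : ℝ, ∀ i, lam i ≤ C) (r : ℝ) :
    Continuous (diagNorm (fun i => b i) lam r) := by
  obtain ⟨D, -, hDn⟩ := exists_weight b lam hlam_lb hlam_ub r
  rw [funext hDn]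
  fun_prop

lemma diagNorm_sub_le (b : HilbertBasis I ℝ H) (lam : I → ℝ)
    (hlam_lb : ∃ c : ℝ, 0 < c ∧ ∀ i, c ≤ lam i) (hlam_ub : ∃ C : ℝ, ∀ i, lam i ≤ C) (r : ℝ)
    (x y : H) : diagNorm (fun i => b i) lam r (x - y) ≤
      diagNorm (fun i => b i) lam r x + diagNorm (fun i => b i) lam r y := by
  obtain ⟨D, -, hDn⟩ := exists_weight b lam hlam_lb hlam_ub r
  rw [hDn, hDn, hDn, map_sub]
  exact norm_sub_le _ _

lemma diagNorm_add_le (b : HilbertBasis I ℝ H) (lam : I → ℝ)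
    (hlam_lb : ∃ c : ℝ, 0 < c ∧ ∀ i, c ≤ lam i) (hlam_ub : ∃ C : ℝ, ∀ i, lam i ≤ C) (r : ℝ)
    (x y : H) : diagNorm (fun i => b i) lam r (x + y) ≤
      diagNorm (fun i => b i) lam r x + diagNorm (fun i => b i) lam r y := by
  obtain ⟨D, -, hDn⟩ := exists_weight b lam hlam_lb hlam_ub r
  rw [hDn, hDn, hDn, map_add]
  exact norm_add_le _ _

/-- Comparison of two interpolation norms through the eigenvalue-weighted coordinates. -/
lemma diagNorm_le_mul (b : HilbertBasis I ℝ H) (lam : I → ℝ)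
    (hlam_lb : ∃ c : ℝ, 0 < c ∧ ∀ i, c ≤ lam i) (hlam_ub : ∃ C : ℝ, ∀ i, lam i ≤ C) (r q k : ℝ)
    (hk : 0 ≤ k) (x y : H)
    (hxy : ∀ i, lam i ^ r * |⟪b i, x⟫| ≤ k * (lam i ^ q * |⟪b i, y⟫|)) :
    diagNorm (fun i => b i) lam r x ≤ k * diagNorm (fun i => b i) lam q y := by
  obtain ⟨D, hD, hDn⟩ := exists_weight b lam hlam_lb hlam_ub r
  obtain ⟨E, hE, hEn⟩ := exists_weight b lam hlam_lb hlam_ub q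
  obtain ⟨c, hc, hcl⟩ := hlam_lb
  have h1 : ‖k • E y‖ = k * ‖E y‖ := by rw [norm_smul, Real.norm_of_nonneg hk]
  rw [hDn, hEn, ← h1]
  refine norm_le_of_coord_le b fun i => ?_
  have hpos : 0 < lam i := hc.trans_le (hcl i)
  rw [hD, inner_smul_right, hE, abs_mul, abs_mul, abs_mul, abs_of_nonneg hk,
    abs_of_pos (Real.rpow_pos_of_pos hpos r), abs_of_pos (Real.rpow_pos_of_pos hpos q)]
  exact hxy i

/-- The scalar inequality behind all smoothing estimates: `1 - e^{-x} ≤ x^a` for `a ∈ [0,1]`. -/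
lemma one_sub_exp_neg_le_rpow {x a : ℝ} (hx : 0 ≤ x) (ha0 : 0 ≤ a) (ha1 : a ≤ 1) :
    1 - Real.exp (-x) ≤ x ^ a := by
  rcases le_total x 1 with h | h
  · have h1 := Real.one_sub_le_exp_neg x
    have h2 : x ≤ x ^ a := by
      simpa using Real.rpow_le_rpow_of_exponent_ge' hx h ha0 ha1
    linarith
  · have := Real.one_le_rpow h ha0
    have := Real.exp_pos (-x)
    linarith

/-- The operator `A v = -Σᵢ λᵢ ⟨bᵢ, v⟩ bᵢ`, together with its inverse and the quadratic form
`⟨v, A v⟩ = -‖v‖²_{H_{1/2}}`. -/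
lemma exists_generator (b : HilbertBasis I ℝ H) (lam : I → ℝ)
    (hlam_lb : ∃ c : ℝ, 0 < c ∧ ∀ i, c ≤ lam i) (hlam_ub : ∃ C : ℝ, ∀ i, lam i ≤ C) :
    ∃ A B : H →L[ℝ] H, (∀ i v, ⟪b i, A v⟫ = -lam i * ⟪b i, v⟫) ∧
      (∀ i v, ⟪b i, B v⟫ = -(lam i)⁻¹ * ⟪b i, v⟫) ∧ (∀ v, A (B v) = v) ∧ (∀ v, B (A v) = v) ∧
      ∀ v, ⟪v, A v⟫ = -diagNorm (fun i => b i) lam (1 / 2) v ^ 2 := by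
  obtain ⟨D, hD, hDn⟩ := exists_weight b lam hlam_lb hlam_ub (1 / 2)
  obtain ⟨c, hc, hcl⟩ := hlam_lb
  obtain ⟨C, hC⟩ := hlam_ub
  have hpos : ∀ i, 0 < lam i := fun i => hc.trans_le (hcl i)
  obtain ⟨A, hA⟩ := exists_diagonal b (fun i => -lam i) C fun i => by
    rw [abs_neg, abs_of_pos (hpos i)]; exact hC i
  obtain ⟨B, hB⟩ := exists_diagonal b (fun i => -(lam i)⁻¹) c⁻¹ fun i => by
    rw [abs_neg, abs_of_pos (inv_pos.2 (hpos i))]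
    exact inv_anti₀ hc (hcl i)
  refine ⟨A, B, hA, hB, fun v => eq_of_coord_eq b fun i => ?_,
    fun v => eq_of_coord_eq b fun i => ?_, fun v => ?_⟩
  · rw [hA, hB]
    have := (hpos i).ne'
    field_simp
  · rw [hB, hA]
    have := (hpos i).ne'
    field_simp
  · rw [hDn, ← (norm_sq_hasSum b (D v)).tsum_eq, ← b.tsum_inner_mul_inner, ← tsum_neg]
    refine tsum_congr fun i => ?_
    rw [hA, hD, real_inner_comm, mul_pow, ← Real.rpow_mul_natCast (hpos i).le]
    norm_num
    ring

/-- The group generated by `A`. -/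
noncomputable def expGroup (A : H →L[ℝ] H) (t : ℝ) : H →L[ℝ] H := NormedSpace.exp (t • A)

lemma expGroup_zero (A : H →L[ℝ] H) (v : H) : expGroup A 0 v = v := by
  simp [expGroup]

variable [CompleteSpace H]

lemma expGroup_add (A : H →L[ℝ] H) (s t : ℝ) (v : H) :
    expGroup A (s + t) v = expGroup A s (expGroup A t v) := by
  let : NormedAlgebra ℚ (H →L[ℝ] H) := .restrictScalars ℚ ℝ _
  rw [expGroup, add_smul, NormedSpace.exp_add_of_commute]
  · rfl
  · exact ((Commute.refl A).smul_left s).smul_right t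

lemma expGroup_hasDerivAt (A : H →L[ℝ] H) (t : ℝ) :
    HasDerivAt (expGroup A) (A * expGroup A t) t :=
  hasDerivAt_exp_smul_const' A t

lemma expGroup_hasDerivAt' (A : H →L[ℝ] H) (t : ℝ) :
    HasDerivAt (expGroup A) (expGroup A t * A) t :=
  hasDerivAt_exp_smul_const A t

lemma expGroup_continuous (A : H →L[ℝ] H) : Continuous (expGroup A) :=
  continuous_iff_continuousAt.2 fun t => (expGroup_hasDerivAt A t).continuousAt

lemma expGroup_coord (b : HilbertBasis I ℝ H) (lam : I → ℝ) (A : H →L[ℝ] H)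
    (hA : ∀ i v, ⟪b i, A v⟫ = -lam i * ⟪b i, v⟫) (t : ℝ) (i : I) (v : H) :
    ⟪b i, expGroup A t v⟫ = Real.exp (-(t * lam i)) * ⟪b i, v⟫ := by
  have hpow : ∀ n : ℕ, ⟪b i, ((t • A) ^ n) v⟫ = (-(t * lam i)) ^ n * ⟪b i, v⟫ := by
    intro n
    induction n with
    | zero => simp
    | succ n ih =>
      rw [pow_succ', mul_apply_eq_comp, smul_apply,
        inner_smul_right, hA, ih]
      ring
  have h1 := NormedSpace.exp_series_hasSum_exp' (𝕂 := ℝ) (t • A)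
  have h2 := (h1.mapL (ContinuousLinearMap.apply ℝ H v)).mapL (innerSL ℝ (b i))
  have h3 := (NormedSpace.exp_series_hasSum_exp' (𝕂 := ℝ) (-(t * lam i))).mul_right ⟪b i, v⟫
  rw [← Real.exp_eq_exp_ℝ] at h3
  refine h2.unique (h3.congr_fun fun n => ?_)
  simp only [ContinuousLinearMap.apply_apply, smul_apply, innerSL_apply_apply,
    inner_smul_right, hpow, smul_eq_mul]
  ring

lemma diagSemigroup_eq (b : HilbertBasis I ℝ H) (lam : I → ℝ) (A : H →L[ℝ] H)
    (hA : ∀ i v, ⟪b i, A v⟫ = -lam i * ⟪b i, v⟫) (t : ℝ) (v : H) :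
    diagSemigroup (fun i => b i) lam t v = expGroup A t v := by
  rw [diagSemigroup, ← (b.hasSum_repr (expGroup A t v)).tsum_eq]
  refine tsum_congr fun i => ?_
  rw [b.repr_apply_apply, expGroup_coord b lam A hA]

/-- Variation of constants for a constant inhomogeneity. -/
lemma integral_expGroup (A B : H →L[ℝ] H) (hBA : ∀ v, B (A v) = v) (a t : ℝ) (f : H) :
    ∫ s in a..t, expGroup A (t - s) f = B (expGroup A (t - a) f - f) := by
  have hd : ∀ s ∈ Set.uIcc a t, HasDerivAt (fun s => -B (expGroup A (t - s) f))
      (expGroup A (t - s) f) s := by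
    intro s _
    have h1 : HasDerivAt (fun s => expGroup A (t - s)) ((-1 : ℝ) • (A * expGroup A (t - s))) s :=
      (expGroup_hasDerivAt A (t - s)).scomp s ((hasDerivAt_id s).const_sub t)
    have h2 := (B.hasFDerivAt.comp_hasDerivAt s (h1.clm_apply (hasDerivAt_const s f))).neg
    exact h2.congr_deriv (by simp [hBA])
  rw [intervalIntegral.integral_eq_sub_of_hasDerivAt hd]
  · simp only [sub_self, expGroup_zero, map_sub]
    abel
  · apply Continuous.intervalIntegrable
    exact ((expGroup_continuous A).comp (by fun_prop)).clm_apply continuous_const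

/-- `‖(e^{τA} - 1) x‖_{H_ρ} ≤ τ^{ϱ-ρ} ‖x‖_{H_ϱ}`. -/
lemma diagNorm_expGroup_sub_le (b : HilbertBasis I ℝ H) (lam : I → ℝ)
    (hlam_lb : ∃ c : ℝ, 0 < c ∧ ∀ i, c ≤ lam i) (hlam_ub : ∃ C : ℝ, ∀ i, lam i ≤ C)
    (A : H →L[ℝ] H) (hA : ∀ i v, ⟪b i, A v⟫ = -lam i * ⟪b i, v⟫) (τ r q : ℝ) (hτ : 0 ≤ τ)
    (hq : q ∈ Set.Icc r (r + 1)) (x : H) :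
    diagNorm (fun i => b i) lam r (expGroup A τ x - x) ≤
      τ ^ (q - r) * diagNorm (fun i => b i) lam q x := by
  refine diagNorm_le_mul b lam hlam_lb hlam_ub _ _ _ (by positivity) _ _ fun i => ?_
  obtain ⟨c, hc, hcl⟩ := hlam_lb
  have hpos : 0 < lam i := hc.trans_le (hcl i)
  have h1 := one_sub_exp_neg_le_rpow (x := τ * lam i) (a := q - r) (by positivity)
    (by linarith [hq.1]) (by linarith [hq.2])
  have h2 : Real.exp (-(τ * lam i)) ≤ 1 :=
    Real.exp_le_one_iff.2 (neg_nonpos.2 (mul_nonneg hτ hpos.le))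
  have h3 : ⟪b i, expGroup A τ x - x⟫ = -((1 - Real.exp (-(τ * lam i))) * ⟪b i, x⟫) := by
    rw [inner_sub_right, expGroup_coord b lam A hA]
    ring
  rw [h3, abs_neg, abs_mul, abs_of_nonneg (by linarith)]
  rw [Real.mul_rpow hτ hpos.le] at h1
  have h4 : lam i ^ q = lam i ^ r * lam i ^ (q - r) := by
    rw [← Real.rpow_add hpos]; congr 1; ring
  rw [h4]
  calc lam i ^ r * ((1 - Real.exp (-(τ * lam i))) * |⟪b i, x⟫|)
      ≤ lam i ^ r * ((τ ^ (q - r) * lam i ^ (q - r)) * |⟪b i, x⟫|) := by gcongr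
    _ = _ := by ring

/-- `‖∫₀^τ e^{sA} f ds‖_{H_r} ≤ τ^{1-α-r} ‖f‖_{H_{-α}}`, with the integral written as
`A⁻¹ (e^{τA} - 1) f`. -/
lemma diagNorm_inv_expGroup_sub_le (b : HilbertBasis I ℝ H) (lam : I → ℝ)
    (hlam_lb : ∃ c : ℝ, 0 < c ∧ ∀ i, c ≤ lam i) (hlam_ub : ∃ C : ℝ, ∀ i, lam i ≤ C)
    (A B : H →L[ℝ] H) (hA : ∀ i v, ⟪b i, A v⟫ = -lam i * ⟪b i, v⟫)
    (hB : ∀ i v, ⟪b i, B v⟫ = -(lam i)⁻¹ * ⟪b i, v⟫)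
    (τ r α : ℝ) (hτ : 0 ≤ τ) (h0 : 0 ≤ 1 - α - r) (h1 : 1 - α - r ≤ 1) (f : H) :
    diagNorm (fun i => b i) lam r (B (expGroup A τ f - f)) ≤
      τ ^ (1 - α - r) * diagNorm (fun i => b i) lam (-α) f := by
  refine le_trans ?_ (diagNorm_expGroup_sub_le b lam hlam_lb hlam_ub A hA τ (r - 1) (-α) hτ
    ⟨by linarith, by linarith⟩ f |>.trans_eq (by congr 2; ring))
  rw [← one_mul (diagNorm _ _ (r - 1) _)]
  refine diagNorm_le_mul b lam hlam_lb hlam_ub _ _ _ zero_le_one _ _ fun i => ?_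
  obtain ⟨c, hc, hcl⟩ := hlam_lb
  have hpos : 0 < lam i := hc.trans_le (hcl i)
  rw [hB, abs_mul, abs_neg, abs_of_pos (inv_pos.2 hpos), Real.rpow_sub_one hpos.ne', one_mul]
  exact (by ring : _ = _).le

end Diagonal

/-! ### Step functions and a Gronwall inequality -/

section Step

open Filter Topology

lemma step_intervalIntegrable {h : ℝ} (hh : 0 < h) (γ : ℤ → ℝ) (a b : ℝ) :
    IntervalIntegrable (fun s => γ ⌊s / h⌋) volume a b := by
  have hm : Measurable (fun s : ℝ => γ ⌊s / h⌋) :=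
    (measurable_of_countable γ).comp (Int.measurable_floor.comp (measurable_id.div_const h))
  rw [intervalIntegrable_iff]
  refine Measure.integrableOn_of_bounded (M := ∑ k ∈ Finset.Icc ⌊min a b / h⌋ ⌊max a b / h⌋, |γ k|)
    (by simp [Set.uIoc]) hm.aestronglyMeasurable ?_
  filter_upwards [ae_restrict_mem measurableSet_uIoc] with s hs
  rw [Set.uIoc, Set.mem_Ioc] at hs
  refine Finset.single_le_sum (f := fun k => |γ k|) (fun k _ => abs_nonneg _) ?_
  rw [Finset.mem_Icc]
  constructor
  · exact Int.floor_le_floor (by gcongr; exact hs.1.le)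
  · exact Int.floor_le_floor (by gcongr; exact hs.2)

lemma eventually_floor_eq {h : ℝ} (hh : 0 < h) (t : ℝ) :
    ∀ᶠ s in 𝓝[≥] t, ⌊s / h⌋ = ⌊t / h⌋ := by
  have h1 : t < h * (⌊t / h⌋ + 1) := by
    have := Int.lt_floor_add_one (t / h)
    rwa [div_lt_iff₀' hh] at this
  filter_upwards [Ico_mem_nhdsGE h1] with s hs
  rw [Int.floor_eq_iff]
  constructor
  · exact (Int.floor_le _).trans (by gcongr; exact hs.1)
  · rw [div_lt_iff₀' hh]; exact hs.2

/-- Gronwall's inequality for a right-differentiable function whose coefficients are constant on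
the cells of the grid `hℤ`. -/
lemma gronwall_step {h T : ℝ} (hh : 0 < h) (x x' : ℝ → ℝ) (a g : ℤ → ℝ)
    (ha : ∀ k, 0 ≤ a k) (hg : ∀ k, 0 ≤ g k)
    (hx : ContinuousOn x (Set.Icc 0 T))
    (hx' : ∀ t ∈ Set.Ico 0 T, HasDerivWithinAt x (x' t) (Set.Ici t) t)
    (hx0 : x 0 ≤ 0) (hle : ∀ t ∈ Set.Ico 0 T, x' t ≤ a ⌊t / h⌋ * x t + g ⌊t / h⌋)
    {t : ℝ} (ht : t ∈ Set.Icc 0 T) :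
    x t ≤ ∫ s in (0 : ℝ)..T, Real.exp (∫ u in s..T, a ⌊u / h⌋) * g ⌊s / h⌋ := by
  have hai := step_intervalIntegrable hh a
  have hgi := step_intervalIntegrable hh g
  set E : ℝ → ℝ := fun t => ∫ u in (0 : ℝ)..t, a ⌊u / h⌋ with hE
  have hEc : Continuous E := intervalIntegral.continuous_primitive hai 0
  have hwc : Continuous fun s => Real.exp (-E s) := by fun_prop
  have hwgi : ∀ c d, IntervalIntegrable (fun s => Real.exp (-E s) * g ⌊s / h⌋) volume c d :=
    fun c d => (hgi c d).continuousOn_mul hwc.continuousOn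
  have hstep : ∀ γ : ℤ → ℝ, ∀ t, ContinuousWithinAt (fun s : ℝ => γ ⌊s / h⌋) (Set.Ioi t) t := by
    intro γ t
    have h1 : (fun s : ℝ => γ ⌊s / h⌋) =ᶠ[𝓝[≥] t] fun _ => γ ⌊t / h⌋ :=
      (eventually_floor_eq hh t).mono fun s hs => by simp only [hs]
    exact (continuousWithinAt_const.congr_of_eventuallyEq
      (h1.filter_mono (nhdsWithin_mono _ Set.Ioi_subset_Ici_self)) rfl)
  have hmeas : ∀ f : ℝ → ℝ, (∀ c d, IntervalIntegrable f volume c d) → ∀ t,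
      StronglyMeasurableAtFilter f (𝓝[>] t) := fun f hf t =>
    ⟨Set.Ioc t (t + 1), Ioc_mem_nhdsGT (by linarith), (hf t (t + 1)).1.aestronglyMeasurable⟩
  have hE' : ∀ t, HasDerivWithinAt E (a ⌊t / h⌋) (Set.Ici t) t := fun t =>
    intervalIntegral.integral_hasDerivWithinAt_right (hai 0 t) (hmeas _ hai t) (hstep a t)
  have hB' : ∀ t, HasDerivWithinAt (fun t => ∫ s in (0 : ℝ)..t, Real.exp (-E s) * g ⌊s / h⌋)
      (Real.exp (-E t) * g ⌊t / h⌋) (Set.Ici t) t := fun t =>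
    intervalIntegral.integral_hasDerivWithinAt_right (hwgi 0 t) (hmeas _ hwgi t)
      (hwc.continuousWithinAt.mul (hstep g t))
  have key := image_le_of_deriv_right_le_deriv_boundary (f := fun t => Real.exp (-E t) * x t)
    (f' := fun t => Real.exp (-E t) * -a ⌊t / h⌋ * x t + Real.exp (-E t) * x' t)
    (a := 0) (b := T) (hwc.continuousOn.mul hx)
    (fun t ht => ((hE' t).neg.exp.mul (hx' t ht)))
    (B := fun t => ∫ s in (0 : ℝ)..t, Real.exp (-E s) * g ⌊s / h⌋)
    (by simpa [hE] using hx0)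
    (intervalIntegral.continuous_primitive hwgi 0).continuousOn
    (fun t _ => hB' t)
    (fun t ht => by
      have := mul_le_mul_of_nonneg_left (hle t ht) (Real.exp_pos (-E t)).le
      linarith) ht
  have hmono : E t ≤ E T :=
    intervalIntegral.integral_mono_interval le_rfl ht.1 ht.2
      (Eventually.of_forall fun s => ha _) (hai 0 T)
  have hnn : ∀ s, 0 ≤ Real.exp (-E s) * g ⌊s / h⌋ := fun s => mul_nonneg (Real.exp_pos _).le (hg _)
  have h1 : ∫ s in (0 : ℝ)..t, Real.exp (-E s) * g ⌊s / h⌋ ≤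
      ∫ s in (0 : ℝ)..T, Real.exp (-E s) * g ⌊s / h⌋ :=
    intervalIntegral.integral_mono_interval le_rfl ht.1 ht.2
      (Eventually.of_forall fun s => hnn s) (hwgi 0 T)
  have h0 : 0 ≤ ∫ s in (0 : ℝ)..T, Real.exp (-E s) * g ⌊s / h⌋ :=
    intervalIntegral.integral_nonneg (ht.1.trans ht.2) fun s _ => hnn s
  calc x t = Real.exp (E t) * (Real.exp (-E t) * x t) := by
        rw [← mul_assoc, ← Real.exp_add]; simp
    _ ≤ Real.exp (E t) * ∫ s in (0 : ℝ)..T, Real.exp (-E s) * g ⌊s / h⌋ := by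
        gcongr; exact key.trans h1
    _ ≤ Real.exp (E T) * ∫ s in (0 : ℝ)..T, Real.exp (-E s) * g ⌊s / h⌋ := by gcongr
    _ = ∫ s in (0 : ℝ)..T, Real.exp (∫ u in s..T, a ⌊u / h⌋) * g ⌊s / h⌋ := by
        rw [← intervalIntegral.integral_const_mul]
        congr 1
        ext s
        rw [← mul_assoc, ← Real.exp_add, ← intervalIntegral.integral_interval_sub_left
          (hai 0 T) (hai 0 s), sub_eq_add_neg]

lemma gronwall_integrand_intervalIntegrable {h : ℝ} (hh : 0 < h) (a g : ℤ → ℝ) (T c d : ℝ) :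
    IntervalIntegrable (fun s => Real.exp (∫ u in s..T, a ⌊u / h⌋) * g ⌊s / h⌋) volume c d := by
  refine (step_intervalIntegrable hh g c d).continuousOn_mul (Continuous.continuousOn ?_)
  have h1 : Continuous fun s => ∫ u in T..s, a ⌊u / h⌋ :=
    intervalIntegral.continuous_primitive (step_intervalIntegrable hh a) T
  simp_rw [fun s => intervalIntegral.integral_symm (f := fun u => a ⌊u / h⌋) (μ := volume) T s]
  fun_prop

end Step

/-! ### Minkowski's integral inequality -/

section Minkowski

open Filter Topology

/-- Minkowski's integral inequality `‖∫ f(s,·) ds‖_{L^q} ≤ ∫ ‖f(s,·)‖_{L^q} ds`. -/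
lemma minkowski_integral {S Ω : Type*} [MeasurableSpace S] [MeasurableSpace Ω] (μ : Measure S)
    (ν : Measure Ω) [SFinite μ] [IsFiniteMeasure ν] (f : S → Ω → ℝ≥0∞)
    (hf : Measurable (Function.uncurry f)) (q : ℝ) (hq : 1 ≤ q) :
    (∫⁻ ω, (∫⁻ s, f s ω ∂μ) ^ q ∂ν) ^ (1 / q) ≤ ∫⁻ s, (∫⁻ ω, f s ω ^ q ∂ν) ^ (1 / q) ∂μ := by
  rcases hq.eq_or_lt with rfl | hq1
  · simp only [ENNReal.rpow_one, div_one]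
    rw [lintegral_lintegral_swap]
    exact (hf.comp measurable_swap).aemeasurable
  have hq0 : 0 < q := by linarith
  set R := ∫⁻ s, (∫⁻ ω, f s ω ^ q ∂ν) ^ (1 / q) ∂μ with hR
  set G : Ω → ℝ≥0∞ := fun ω => ∫⁻ s, f s ω ∂μ with hG
  have hGm : Measurable G := Measurable.lintegral_prod_left' hf
  have hfm : ∀ s, Measurable (f s) := fun s => hf.comp measurable_prodMk_left
  have hfm' : ∀ ω, Measurable (fun s => f s ω) := fun ω => hf.comp measurable_prodMk_right
  have hconj : q.HolderConjugate (q / (q - 1)) := Real.HolderConjugate.conjExponent hq1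
  -- Truncating `G` at height `n` makes the quantity that is divided out finite.
  have hn : ∀ n : ℕ, ∫⁻ ω, min (G ω) n ^ q ∂ν ≤ R ^ q := by
    intro n
    set g : Ω → ℝ≥0∞ := fun ω => min (G ω) n with hg
    have hgm : Measurable g := hGm.min measurable_const
    set J := ∫⁻ ω, g ω ^ q ∂ν with hJ
    have hJtop : J ≠ ⊤ := by
      refine ne_of_lt ((lintegral_mono (g := fun _ => (n : ℝ≥0∞) ^ q) fun ω => ?_).trans_lt ?_)
      · exact ENNReal.rpow_le_rpow (min_le_right _ _) hq0.le
      · rw [lintegral_const]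
        exact ENNReal.mul_lt_top (ENNReal.rpow_lt_top_of_nonneg hq0.le (by simp))
          (measure_lt_top _ _)
    have h1 : J ≤ R * J ^ (1 / (q / (q - 1))) := by
      calc J ≤ ∫⁻ ω, G ω * g ω ^ (q - 1) ∂ν := by
            refine lintegral_mono fun ω => ?_
            have : g ω ^ q = g ω * g ω ^ (q - 1) := by
              conv_rhs => rw [← ENNReal.rpow_one (g ω), ← ENNReal.rpow_mul, one_mul]
              rw [← ENNReal.rpow_add_of_nonneg _ _ zero_le_one (by linarith)]
              congr 1; ring
            rw [this]
            gcongr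
            exact min_le_left _ _
        _ = ∫⁻ ω, ∫⁻ s, f s ω * g ω ^ (q - 1) ∂μ ∂ν := by
            refine lintegral_congr fun ω => ?_
            rw [lintegral_mul_const _ (hfm' ω)]
        _ = ∫⁻ s, ∫⁻ ω, f s ω * g ω ^ (q - 1) ∂ν ∂μ := by
            rw [lintegral_lintegral_swap]
            exact ((hf.comp measurable_swap).mul
              ((hgm.pow_const _).comp measurable_fst)).aemeasurable
        _ ≤ ∫⁻ s, (∫⁻ ω, f s ω ^ q ∂ν) ^ (1 / q) * J ^ (1 / (q / (q - 1))) ∂μ := by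
            refine lintegral_mono fun s => ?_
            have := ENNReal.lintegral_mul_le_Lp_mul_Lq ν hconj (hfm s).aemeasurable
              (hgm.pow_const (q - 1)).aemeasurable
            refine this.trans_eq ?_
            congr 2
            refine lintegral_congr fun ω => ?_
            rw [← ENNReal.rpow_mul]
            congr 1
            have : q - 1 ≠ 0 := by linarith
            field_simp
        _ = R * J ^ (1 / (q / (q - 1))) := by
            rw [lintegral_mul_const]
            exact (Measurable.lintegral_prod_right' (f := fun p : S × Ω => f p.1 p.2 ^ q)
              (hf.pow_const q)).pow_const _
    rcases eq_or_ne J 0 with h0 | h0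
    · rw [h0]; exact zero_le
    have h2 : J ^ (1 / q) ≤ R := by
      have h3 : J = J ^ (1 / q) * J ^ (1 / (q / (q - 1))) := by
        rw [← ENNReal.rpow_add _ _ h0 hJtop, one_div, one_div, hconj.inv_add_inv_eq_one,
          ENNReal.rpow_one]
      have hne0 : J ^ (1 / (q / (q - 1))) ≠ 0 := by
        rw [Ne, ENNReal.rpow_eq_zero_iff]
        simp [h0, hJtop]
      have hnet : J ^ (1 / (q / (q - 1))) ≠ ⊤ :=
        ENNReal.rpow_ne_top_of_nonneg (one_div_nonneg.2 hconj.symm.nonneg) hJtop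
      rw [h3] at h1
      nth_rewrite 2 [← h3] at h1
      exact (ENNReal.mul_le_mul_iff_left hne0 hnet).1 h1
    calc J = (J ^ (1 / q)) ^ q := by
          rw [← ENNReal.rpow_mul, one_div_mul_cancel hq0.ne', ENNReal.rpow_one]
      _ ≤ R ^ q := ENNReal.rpow_le_rpow h2 hq0.le
  have hlim : Tendsto (fun n : ℕ => ∫⁻ ω, min (G ω) n ^ q ∂ν) atTop (𝓝 (∫⁻ ω, G ω ^ q ∂ν)) := by
    refine lintegral_tendsto_of_tendsto_of_monotone
      (fun n => ((hGm.min measurable_const).pow_const q).aemeasurable)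
      (Eventually.of_forall fun ω => ?_) (Eventually.of_forall fun ω => ?_)
    · intro m n hmn
      refine ENNReal.rpow_le_rpow (min_le_min le_rfl ?_) hq0.le
      exact_mod_cast hmn
    · have h1 : Tendsto (fun n : ℕ => min (G ω) (n : ℝ≥0∞)) atTop (𝓝 (min (G ω) ⊤)) :=
        tendsto_const_nhds.min ENNReal.tendsto_nat_nhds_top
      rw [min_top_right] at h1
      exact (ENNReal.continuous_rpow_const.tendsto _).comp h1
  have hfin := le_of_tendsto' hlim hn
  calc (∫⁻ ω, G ω ^ q ∂ν) ^ (1 / q) ≤ (R ^ q) ^ (1 / q) :=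
        ENNReal.rpow_le_rpow hfin (by positivity)
    _ = R := by rw [← ENNReal.rpow_mul, mul_one_div_cancel hq0.ne', ENNReal.rpow_one]

end Minkowski

/-! ### The pathwise estimate -/

section Pathwise

open Filter Topology

variable {I H : Type*} [NormedAddCommGroup H] [InnerProductSpace ℝ H]

lemma diagNorm_sub_comm (b : HilbertBasis I ℝ H) (lam : I → ℝ)
    (hlam_lb : ∃ c : ℝ, 0 < c ∧ ∀ i, c ≤ lam i) (hlam_ub : ∃ C : ℝ, ∀ i, lam i ≤ C) (r : ℝ)
    (x y : H) : diagNorm (fun i => b i) lam r (x - y) = diagNorm (fun i => b i) lam r (y - x) := by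
  obtain ⟨D, -, hDn⟩ := exists_weight b lam hlam_lb hlam_ub r
  rw [hDn, hDn, map_sub, map_sub, norm_sub_rev]

/-- Real-variable bookkeeping for the exponents of the step size: `D` stands for the `H_ρ`-distance
of the solution to its value at the last grid point. -/
lemma error_arith {ϕ α ρ ϱ θ ϑ χ h D N : ℝ}
    (hϕ : ϕ ∈ Set.Ico (0:ℝ) 1) (hα : α ∈ Set.Icc (0:ℝ) (1/2))
    (hρ : ρ ∈ Set.Ico (0:ℝ) (1 - α)) (hϱ : ϱ ∈ Set.Icc ρ (ρ + 1))
    (hθ : 0 ≤ θ) (hϑ : 0 ≤ ϑ)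
    (hχ : χ ∈ Set.Icc (0:ℝ) ((2 - 2 * α - 2 * ρ) / (2 + ϑ)))
    (hh : h ∈ Set.Ioc (0:ℝ) 1) (hD0 : 0 ≤ D) (hN0 : 0 ≤ N) (hN : N ≤ h ^ (-χ))
    (hD : D ≤ h ^ (ϱ - ρ) * h ^ (-χ) +
      h ^ (1 - α - ρ) * (Real.sqrt θ * (h ^ (-χ)) ^ (1 + ϑ / 2))) :
    θ * max 1 (N ^ ϑ) * D ^ 2 + θ * D ^ (2 + ϑ) ≤ (1 - ϕ) * (θ * (1 + Real.sqrt θ) ^ (2 + ϑ)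
              * h ^ (min (2 * ϱ) (2 - 2 * α - ϑ * χ) - 2 * ρ - (2 + ϑ) * χ)
            / ((1 / 2 - ϕ / 2) * (1 - α - ρ) ^ (2 + ϑ))) := by
  obtain ⟨hh0, hh1⟩ := hh
  have hs := Real.sqrt_nonneg θ
  have hd : 0 < 1 - α - ρ := by linarith [hρ.2]
  have hd1 : 1 - α - ρ ≤ 1 := by linarith [hρ.1, hα.1]
  set u := h ^ (-χ) with hu
  have hu1 : 1 ≤ u := Real.one_le_rpow_of_pos_of_le_one_of_nonpos hh0 hh1 (by linarith [hχ.1])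
  set C := (1 + Real.sqrt θ) / (1 - α - ρ) with hC
  have hC1 : 1 ≤ C := by
    rw [hC, le_div_iff₀ hd]; linarith
  have hC' : 1 + Real.sqrt θ ≤ C := by
    rw [hC, le_div_iff₀ hd]; nlinarith
  set m := min ϱ (1 - α - ϑ * χ / 2) - ρ - χ with hm
  have hχ2 : χ * (2 + ϑ) ≤ 2 - 2 * α - 2 * ρ := by
    have := hχ.2
    rwa [le_div_iff₀ (by linarith)] at this
  have hmin : ρ ≤ min ϱ (1 - α - ϑ * χ / 2) := le_min hϱ.1 (by nlinarith [hχ.1])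
  have he : min (2 * ϱ) (2 - 2 * α - ϑ * χ) - 2 * ρ - (2 + ϑ) * χ = 2 * m + -χ * ϑ := by
    have : min (2 * ϱ) (2 - 2 * α - ϑ * χ) = 2 * min ϱ (1 - α - ϑ * χ / 2) := by
      rw [mul_min_of_nonneg _ _ (by norm_num : (0:ℝ) ≤ 2)]
      congr 1; ring
    rw [this, hm]; ring
  have hDm : D ≤ C * h ^ m := by
    have h1 : h ^ (ϱ - ρ) * u ≤ h ^ m := by
      rw [hu, ← Real.rpow_add hh0]
      refine Real.rpow_le_rpow_of_exponent_ge hh0 hh1 ?_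
      have := min_le_left ϱ (1 - α - ϑ * χ / 2)
      linarith
    have h2 : h ^ (1 - α - ρ) * u ^ (1 + ϑ / 2) ≤ h ^ m := by
      rw [hu, ← Real.rpow_mul hh0.le, ← Real.rpow_add hh0]
      refine Real.rpow_le_rpow_of_exponent_ge hh0 hh1 ?_
      have := min_le_right ϱ (1 - α - ϑ * χ / 2)
      linarith
    have hpm := Real.rpow_pos_of_pos hh0 m
    calc D ≤ h ^ (ϱ - ρ) * u + Real.sqrt θ * (h ^ (1 - α - ρ) * u ^ (1 + ϑ / 2)) := by
          linarith
      _ ≤ h ^ m + Real.sqrt θ * h ^ m := by gcongr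
      _ = (1 + Real.sqrt θ) * h ^ m := by ring
      _ ≤ C * h ^ m := by gcongr
  have hC0 : 0 ≤ C := by linarith
  have hA : max 1 (N ^ ϑ) * D ^ 2 ≤ C ^ (2 + ϑ) * h ^ (2 * m + -χ * ϑ) := by
    have h1 : max 1 (N ^ ϑ) ≤ h ^ (-χ * ϑ) := by
      rw [Real.rpow_mul hh0.le]
      exact max_le (Real.one_le_rpow hu1 hϑ) (Real.rpow_le_rpow hN0 hN hϑ)
    have h2 : D ^ 2 ≤ C ^ (2 + ϑ) * h ^ (2 * m) := by
      have h3 : D ^ 2 ≤ (C * h ^ m) ^ 2 := by gcongr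
      rw [mul_pow, ← Real.rpow_mul_natCast hh0.le, ← Real.rpow_natCast C 2] at h3
      refine h3.trans ?_
      have h4 : C ^ ((2 : ℕ) : ℝ) ≤ C ^ (2 + ϑ) :=
        Real.rpow_le_rpow_of_exponent_le hC1 (by push_cast; linarith)
      have h5 : h ^ (m * ((2 : ℕ) : ℝ)) = h ^ (2 * m) := by congr 1; push_cast; ring
      rw [h5]
      gcongr
    calc max 1 (N ^ ϑ) * D ^ 2 ≤ h ^ (-χ * ϑ) * (C ^ (2 + ϑ) * h ^ (2 * m)) := by gcongr
      _ = _ := by rw [Real.rpow_add hh0]; ring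
  have hB : D ^ (2 + ϑ) ≤ C ^ (2 + ϑ) * h ^ (2 * m + -χ * ϑ) := by
    calc D ^ (2 + ϑ) ≤ (C * h ^ m) ^ (2 + ϑ) := Real.rpow_le_rpow hD0 hDm (by linarith)
      _ = C ^ (2 + ϑ) * h ^ (m * (2 + ϑ)) := by
          rw [Real.mul_rpow hC0 (Real.rpow_nonneg hh0.le _), ← Real.rpow_mul hh0.le]
      _ ≤ _ := by
          have : h ^ (m * (2 + ϑ)) ≤ h ^ (2 * m + -χ * ϑ) := by
            refine Real.rpow_le_rpow_of_exponent_ge hh0 hh1 ?_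
            have : 0 ≤ ϑ * (m + χ) := mul_nonneg hϑ (by rw [hm]; linarith)
            linarith
          gcongr
  have hK : (1 - ϕ) * (θ * (1 + Real.sqrt θ) ^ (2 + ϑ)
              * h ^ (min (2 * ϱ) (2 - 2 * α - ϑ * χ) - 2 * ρ - (2 + ϑ) * χ)
            / ((1 / 2 - ϕ / 2) * (1 - α - ρ) ^ (2 + ϑ))) =
      2 * (θ * (C ^ (2 + ϑ) * h ^ (2 * m + -χ * ϑ))) := by
    rw [he, hC, Real.div_rpow (by linarith) hd.le]
    have h1 : (1 - ϕ) ≠ 0 := by linarith [hϕ.2]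
    have h2 : (1 - α - ρ) ^ (2 + ϑ) ≠ 0 := (Real.rpow_pos_of_pos hd _).ne'
    have h3 : (1 / 2 - ϕ / 2) = (1 - ϕ) / 2 := by ring
    rw [h3]
    field_simp
  rw [hK]
  have := mul_le_mul_of_nonneg_left hA hθ
  have := mul_le_mul_of_nonneg_left hB hθ
  linarith

variable [CompleteSpace H]

/-- On the truncation event, the one-step error of the nonlinearity is controlled in
`H_{-1/2}`. Here `v` and `v - o` are the values of the scheme and of its drift part at a grid point,
and the drift part evolves for a time `τ ≤ h`. -/
lemma error_bound (b : HilbertBasis I ℝ H) (lam : I → ℝ)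
    (hlam_lb : ∃ c : ℝ, 0 < c ∧ ∀ i, c ≤ lam i) (hlam_ub : ∃ C : ℝ, ∀ i, lam i ≤ C)
    (A B : H →L[ℝ] H) (hA : ∀ i v, ⟪b i, A v⟫ = -lam i * ⟪b i, v⟫)
    (hB : ∀ i v, ⟪b i, B v⟫ = -(lam i)⁻¹ * ⟪b i, v⟫) (F : H → H)
    {ϕ α ρ ϱ θ ϑ χ h : ℝ}
    (hϕ : ϕ ∈ Set.Ico (0:ℝ) 1) (hα : α ∈ Set.Icc (0:ℝ) (1/2))
    (hρ : ρ ∈ Set.Ico (0:ℝ) (1 - α)) (hϱ : ϱ ∈ Set.Icc ρ (ρ + 1))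
    (hθ : 0 ≤ θ) (hϑ : 0 ≤ ϑ)
    (hχ : χ ∈ Set.Icc (0:ℝ) ((2 - 2 * α - 2 * ρ) / (2 + ϑ)))
    (hh : h ∈ Set.Ioc (0:ℝ) 1)
    (hlip : ∀ v w : H, diagNorm (fun i => b i) lam (-(1/2)) (F v - F w) ^ 2 ≤
      θ * max 1 (diagNorm (fun i => b i) lam ϱ v ^ ϑ)
          * diagNorm (fun i => b i) lam ρ (v - w) ^ 2
        + θ * diagNorm (fun i => b i) lam ρ (v - w) ^ (2 + ϑ))
    (hgrowth : ∀ v : H, diagNorm (fun i => b i) lam (-α) (F v) ^ 2 ≤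
      θ * max 1 (diagNorm (fun i => b i) lam ϱ v ^ (2 + ϑ)))
    (v o : H) (hvo : diagNorm (fun i => b i) lam ϱ v + diagNorm (fun i => b i) lam ϱ o ≤ h ^ (-χ))
    (τ : ℝ) (hτ0 : 0 ≤ τ) (hτh : τ ≤ h) (x : H)
    (hx : x = expGroup A τ (v - o) + B (expGroup A τ (F v) - F v)) :
    diagNorm (fun i => b i) lam (-(1/2)) (F v - F (x + o)) ^ 2 ≤
      (1 - ϕ) * (θ * (1 + Real.sqrt θ) ^ (2 + ϑ)
              * h ^ (min (2 * ϱ) (2 - 2 * α - ϑ * χ) - 2 * ρ - (2 + ϑ) * χ)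
            / ((1 / 2 - ϕ / 2) * (1 - α - ρ) ^ (2 + ϑ))) := by
  have hN0 := diagNorm_nonneg (fun i => b i) lam ϱ v
  have hO0 := diagNorm_nonneg (fun i => b i) lam ϱ o
  have hN : diagNorm (fun i => b i) lam ϱ v ≤ h ^ (-χ) := by linarith
  refine (hlip v (x + o)).trans
    (error_arith hϕ hα hρ hϱ hθ hϑ hχ hh (diagNorm_nonneg _ _ _ _) hN0 hN ?_)
  obtain ⟨hh0, hh1⟩ := hh
  have hu1 : 1 ≤ h ^ (-χ) :=
    Real.one_le_rpow_of_pos_of_le_one_of_nonpos hh0 hh1 (by linarith [hχ.1])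
  have hsplit : x + o - v = (expGroup A τ (v - o) - (v - o)) + B (expGroup A τ (F v) - F v) := by
    rw [hx]; abel
  rw [diagNorm_sub_comm b lam hlam_lb hlam_ub, hsplit]
  refine (diagNorm_add_le b lam hlam_lb hlam_ub _ _ _).trans (add_le_add ?_ ?_)
  · refine (diagNorm_expGroup_sub_le b lam hlam_lb hlam_ub A hA τ ρ ϱ hτ0 hϱ _).trans ?_
    have h1 := (diagNorm_sub_le b lam hlam_lb hlam_ub ϱ v o).trans hvo
    have h2 : τ ^ (ϱ - ρ) ≤ h ^ (ϱ - ρ) := Real.rpow_le_rpow hτ0 hτh (by linarith [hϱ.1])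
    have := diagNorm_nonneg (fun i => b i) lam ϱ (v - o)
    gcongr
  · refine (diagNorm_inv_expGroup_sub_le b lam hlam_lb hlam_ub A B hA hB τ ρ α hτ0
      (by linarith [hρ.2]) (by linarith [hρ.1, hα.1]) _).trans ?_
    have h2 : τ ^ (1 - α - ρ) ≤ h ^ (1 - α - ρ) :=
      Real.rpow_le_rpow hτ0 hτh (by linarith [hρ.2])
    have hg0 := diagNorm_nonneg (fun i => b i) lam (-α) (F v)
    have h3 : diagNorm (fun i => b i) lam (-α) (F v) ≤
        Real.sqrt θ * (h ^ (-χ)) ^ (1 + ϑ / 2) := by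
      refine (sq_le_sq₀ hg0 (by positivity)).1 ((hgrowth v).trans ?_)
      rw [mul_pow, Real.sq_sqrt hθ, ← Real.rpow_mul_natCast (by linarith)]
      have h4 : (1 + ϑ / 2) * ((2 : ℕ) : ℝ) = 2 + ϑ := by push_cast; ring
      rw [h4]
      gcongr
      exact max_le (Real.one_le_rpow hu1 (by linarith))
        (Real.rpow_le_rpow hN0 hN (by linarith))
    gcongr

/-- Regularity of the mild solution with a piecewise constant inhomogeneity `f`, and its explicit
form on a single cell of the grid. -/
lemma mild_properties (A B : H →L[ℝ] H) (hBA : ∀ v, B (A v) = v) {h T : ℝ} (hh : 0 < h)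
    (hT : 0 < T) (f : ℤ → H) (X : ℝ → H)
    (hInt : IntervalIntegrable (fun s => expGroup A (T - s) (f ⌊s / h⌋)) volume 0 T)
    (hX : ∀ t ∈ Set.Icc 0 T, X t = ∫ s in (0:ℝ)..t, expGroup A (t - s) (f ⌊s / h⌋)) :
    ContinuousOn X (Set.Icc 0 T) ∧
    (∀ t ∈ Set.Ico 0 T, HasDerivWithinAt X (A (X t) + f ⌊t / h⌋) (Set.Ici t) t) ∧
    (∀ k : ℤ, 0 ≤ k → ∀ t ∈ Set.Icc (h * k) (h * (k + 1)), t ≤ T →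
      X t = expGroup A (t - h * k) (X (h * k)) + B (expGroup A (t - h * k) (f k) - f k)) := by
  set z : ℝ → H := fun s => expGroup A (-s) (f ⌊s / h⌋) with hz
  have hcomp : ∀ t s : ℝ, expGroup A (t - s) (f ⌊s / h⌋) = expGroup A t (z s) := by
    intro t s
    rw [hz, ← expGroup_add, sub_eq_add_neg]
  have hzi : IntervalIntegrable z volume 0 T := by
    have h1 : z = fun s => expGroup A (-T) (expGroup A (T - s) (f ⌊s / h⌋)) := by
      ext s
      have h2 : -T + (T - s) = -s := by ring
      rw [← expGroup_add, h2]
    rw [h1, intervalIntegrable_iff]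
    rw [intervalIntegrable_iff] at hInt
    exact (expGroup A (-T)).integrable_comp hInt
  have hzi' : ∀ c ∈ Set.Icc 0 T, ∀ d ∈ Set.Icc 0 T, IntervalIntegrable z volume c d := by
    intro c hc d hd
    refine hzi.mono_set ?_
    rw [Set.uIcc_of_le hT.le]
    exact Set.uIcc_subset_Icc hc hd
  have h0T : (0:ℝ) ∈ Set.Icc 0 T := ⟨le_rfl, hT.le⟩
  set Z : ℝ → H := fun t => ∫ s in (0:ℝ)..t, z s with hZ
  have hXZ : ∀ t ∈ Set.Icc 0 T, X t = expGroup A t (Z t) := by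
    intro t ht
    rw [hX t ht, hZ]
    simp_rw [hcomp]
    exact (expGroup A t).intervalIntegral_comp_comm (hzi' 0 h0T t ht)
  have hSc := expGroup_continuous A
  refine ⟨?_, ?_, ?_⟩
  · refine ContinuousOn.congr ?_ hXZ
    refine hSc.continuousOn.clm_apply ?_
    have := intervalIntegral.continuousOn_primitive_interval' hzi (Set.left_mem_uIcc)
    rwa [Set.uIcc_of_le hT.le] at this
  · intro t ht
    have ht' : t ∈ Set.Icc 0 T := ⟨ht.1, ht.2.le⟩
    have hcont : ContinuousWithinAt z (Set.Ioi t) t := by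
      have h1 : z =ᶠ[𝓝[≥] t] fun s => expGroup A (-s) (f ⌊t / h⌋) :=
        (eventually_floor_eq hh t).mono fun s hs => by simp only [hz, hs]
      have h2 : ContinuousWithinAt (fun s => expGroup A (-s) (f ⌊t / h⌋)) (Set.Ioi t) t :=
        ((hSc.comp continuous_neg).clm_apply continuous_const).continuousWithinAt
      exact h2.congr_of_eventuallyEq
        (h1.filter_mono (nhdsWithin_mono _ Set.Ioi_subset_Ici_self)) rfl
    have hmeas : StronglyMeasurableAtFilter z (𝓝[>] t) :=
      ⟨Set.Ioc t T, Ioc_mem_nhdsGT ht.2,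
        (hzi' t ht' T ⟨hT.le, le_rfl⟩).1.aestronglyMeasurable⟩
    have hZ' : HasDerivWithinAt Z (z t) (Set.Ici t) t :=
      intervalIntegral.integral_hasDerivWithinAt_right (hzi' 0 h0T t ht') hmeas hcont
    have hSZ := (expGroup_hasDerivAt A t).hasDerivWithinAt (s := Set.Ici t) |>.clm_apply hZ'
    have hXe : X =ᶠ[𝓝[≥] t] fun t => expGroup A t (Z t) := by
      filter_upwards [Icc_mem_nhdsGE ht.2] with s hs
      exact hXZ s ⟨ht.1.trans hs.1, hs.2⟩
    refine (hSZ.congr_of_eventuallyEq hXe (hXZ t ht')).congr_deriv ?_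
    rw [hXZ t ht', ← hcomp, sub_self, expGroup_zero]
    rfl
  · intro k hk t ht htT
    have hk0 : 0 ≤ h * (k : ℝ) := mul_nonneg hh.le (by exact_mod_cast hk)
    have hkT : h * (k : ℝ) ∈ Set.Icc 0 T := ⟨hk0, ht.1.trans htT⟩
    have ht' : t ∈ Set.Icc 0 T := ⟨hk0.trans ht.1, htT⟩
    have h1 : Z t = Z (h * k) + ∫ s in (h * k)..t, z s :=
      (intervalIntegral.integral_add_adjacent_intervals (hzi' _ h0T _ hkT)
        (hzi' _ hkT _ ht')).symm
    rw [hXZ t ht', h1, map_add, hXZ _ hkT, ← expGroup_add, sub_add_cancel]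
    congr 1
    rw [← integral_expGroup A B hBA,
      ← (expGroup A t).intervalIntegral_comp_comm (hzi' _ hkT _ ht')]
    refine intervalIntegral.integral_congr_ae ?_
    filter_upwards [Measure.ae_ne volume t] with s hst hs
    rw [Set.uIoc_of_le ht.1] at hs
    have hfl : ⌊s / h⌋ = k := by
      rw [Int.floor_eq_iff, le_div_iff₀' hh, div_lt_iff₀' hh]
      exact ⟨hs.1.le, (lt_of_le_of_ne hs.2 hst).trans_le ht.2⟩
    rw [← hcomp, hfl]

end Pathwise

/-! ### Energy estimate and joint measurability -/

section Assembly

/-- The pathwise a priori bound: testing the evolution equation of `y - o` with `y - o` itself,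
coercivity absorbs the principal part, the one-step error costs at most `K`, and Gronwall's
inequality concludes. -/
lemma path_bound {I H : Type*} [NormedAddCommGroup H] [InnerProductSpace ℝ H] [CompleteSpace H]
    (b : HilbertBasis I ℝ H) (lam : I → ℝ)
    (hlam_lb : ∃ c : ℝ, 0 < c ∧ ∀ i, c ≤ lam i) (hlam_ub : ∃ C : ℝ, ∀ i, lam i ≤ C)
    (A B : H →L[ℝ] H) (hA : ∀ i v, ⟪b i, A v⟫ = -lam i * ⟪b i, v⟫)
    (hB : ∀ i v, ⟪b i, B v⟫ = -(lam i)⁻¹ * ⟪b i, v⟫)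
    (hAq : ∀ v, ⟪v, A v⟫ = -diagNorm (fun i => b i) lam (1 / 2) v ^ 2)
    {T : ℝ} (F : H → H) (φ Φ : H → ℝ) (hφ0 : ∀ v, 0 ≤ φ v) (hΦ0 : ∀ v, 0 ≤ Φ v)
    {ϕ α ρ ϱ θ ϑ χ h : ℝ}
    (hϕ : ϕ ∈ Set.Ico (0:ℝ) 1) (hα : α ∈ Set.Icc (0:ℝ) (1/2))
    (hρ : ρ ∈ Set.Ico (0:ℝ) (1 - α)) (hϱ : ϱ ∈ Set.Icc ρ (ρ + 1))
    (hθ : 0 ≤ θ) (hϑ : 0 ≤ ϑ)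
    (hχ : χ ∈ Set.Icc (0:ℝ) ((2 - 2 * α - 2 * ρ) / (2 + ϑ)))
    (hh : h ∈ Set.Ioc (0:ℝ) 1)
    (hcoer : ∀ v w : H, ⟪v, F (v + w)⟫ ≤
      1 / 2 * φ w * ‖v‖ ^ 2 + ϕ * diagNorm (fun i => b i) lam (1/2) v ^ 2 + 1 / 2 * Φ w)
    (hlip : ∀ v w : H, diagNorm (fun i => b i) lam (-(1/2)) (F v - F w) ^ 2 ≤
      θ * max 1 (diagNorm (fun i => b i) lam ϱ v ^ ϑ)
          * diagNorm (fun i => b i) lam ρ (v - w) ^ 2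
        + θ * diagNorm (fun i => b i) lam ρ (v - w) ^ (2 + ϑ))
    (hgrowth : ∀ v : H, diagNorm (fun i => b i) lam (-α) (F v) ^ 2 ≤
      θ * max 1 (diagNorm (fun i => b i) lam ϱ v ^ (2 + ϑ)))
    (y o : ℝ → H) (f : ℤ → H)
    (hf : ∀ k : ℤ, f k = if diagNorm (fun i => b i) lam ϱ (y (h * k))
      + diagNorm (fun i => b i) lam ϱ (o (h * k)) ≤ h ^ (-χ) then F (y (h * k)) else 0)
    (hcont : ContinuousOn (fun t => y t - o t) (Set.Icc 0 T))
    (hder : ∀ t ∈ Set.Ico 0 T, HasDerivWithinAt (fun t => y t - o t)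
      (A (y t - o t) + f ⌊t / h⌋) (Set.Ici t) t)
    (hcell : ∀ k : ℤ, 0 ≤ k → ∀ t ∈ Set.Icc (h * k) (h * (k + 1)), t ≤ T →
      y t - o t = expGroup A (t - h * k) (y (h * k) - o (h * k))
        + B (expGroup A (t - h * k) (f k) - f k))
    (h0 : y 0 - o 0 = 0) (K : ℝ) (hK0 : 0 ≤ K)
    (hK : K = θ * (1 + Real.sqrt θ) ^ (2 + ϑ)
              * h ^ (min (2 * ϱ) (2 - 2 * α - ϑ * χ) - 2 * ρ - (2 + ϑ) * χ)
            / ((1 / 2 - ϕ / 2) * (1 - α - ρ) ^ (2 + ϑ)))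
    {t : ℝ} (ht : t ∈ Set.Icc 0 T) :
    ‖y t - o t‖ ^ 2 ≤ ∫ s in (0:ℝ)..T,
      Real.exp (∫ u in s..T, φ (o (h * (⌊u / h⌋ : ℝ)))) * (Φ (o (h * (⌊s / h⌋ : ℝ))) + K) := by
  refine gronwall_step hh.1 (fun t => ‖y t - o t‖ ^ 2)
    (fun t => 2 * ⟪y t - o t, A (y t - o t) + f ⌊t / h⌋⟫)
    (fun k => φ (o (h * k))) (fun k => Φ (o (h * k)) + K)
    (fun k => hφ0 _) (fun k => add_nonneg (hΦ0 _) hK0) (hcont.norm.pow 2)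
    (fun t ht => (hder t ht).norm_sq) (by simp [h0]) ?_ ht
  intro t ht
  set k := ⌊t / h⌋ with hk
  have hk0 : 0 ≤ k := Int.floor_nonneg.2 (div_nonneg ht.1 hh.1.le)
  have hkt : t ∈ Set.Icc (h * (k : ℝ)) (h * (k + 1)) := by
    have h1 := Int.floor_le (t / h)
    have h2 := (Int.lt_floor_add_one (t / h)).le
    rw [le_div_iff₀' hh.1] at h1
    rw [div_le_iff₀' hh.1] at h2
    exact ⟨h1, h2⟩
  have hxt := hcell k hk0 t hkt ht.2.le
  set x := y t - o t with hx
  set w := o (h * (k : ℝ)) with hw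
  set v := y (h * (k : ℝ)) with hv
  have hn0 := sq_nonneg (diagNorm (fun i => b i) lam (1/2) x)
  have hφx : 0 ≤ φ w * ‖x‖ ^ 2 := mul_nonneg (hφ0 w) (sq_nonneg _)
  rw [inner_add_right, hAq]
  change 2 * (-diagNorm (fun i => b i) lam (1 / 2) x ^ 2 + ⟪x, f k⟫) ≤ φ w * ‖x‖ ^ 2 + (Φ w + K)
  by_cases hc : diagNorm (fun i => b i) lam ϱ v + diagNorm (fun i => b i) lam ϱ w ≤ h ^ (-χ)
  · have hfk : f k = F v := by rw [hf, if_pos hc]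
    rw [hfk] at hxt ⊢
    have herr := error_bound b lam hlam_lb hlam_ub A B hA hB F hϕ hα hρ hϱ hθ hϑ hχ hh hlip hgrowth
      v w hc (t - h * k) (by linarith [hkt.1]) (by linarith [hkt.2]) x hxt
    rw [← hK] at herr
    have hco := hcoer x w
    have hin := inner_le_diagNorm_mul b lam hlam_lb hlam_ub x (F v - F (x + w))
    have hsplit : ⟪x, F v⟫ = ⟪x, F (x + w)⟫ + ⟪x, F v - F (x + w)⟫ := by
      rw [inner_sub_right]; ring
    rw [hsplit]
    set n := diagNorm (fun i => b i) lam (1/2) x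
    set e := diagNorm (fun i => b i) lam (-(1/2)) (F v - F (x + w))
    have hd : 0 < 1 - ϕ := by linarith [hϕ.2]
    -- Young's inequality, with the part of the principal term not used up by coercivity.
    have hyoung : 2 * (n * e) - 2 * (1 - ϕ) * n ^ 2 ≤ K := by
      refine le_of_mul_le_mul_left ?_ hd
      nlinarith [sq_nonneg ((1 - ϕ) * n - e), sq_nonneg ((1 - ϕ) * n)]
    linarith
  · have hfk : f k = 0 := by rw [hf, if_neg hc]
    rw [hfk, inner_zero_right]
    have := hΦ0 w
    linarith

/-- Joint measurability of the integrand in Gronwall's bound. -/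
lemma measurable_integrand {Ω : Type*} [MeasurableSpace Ω] {h : ℝ} (hh : 0 < h) (T : ℝ)
    (a g : ℤ → Ω → ℝ) (ha : ∀ k, Measurable (a k)) (hg : ∀ k, Measurable (g k)) :
    Measurable (Function.uncurry fun (s : ℝ) (ω : Ω) =>
      ENNReal.ofReal (Real.exp (∫ u in s..T, a ⌊u / h⌋ ω) * g ⌊s / h⌋ ω)) := by
  have hfl : Measurable fun p : ℝ × Ω => (⌊p.1 / h⌋, p.2) :=
    (Int.measurable_floor.comp (measurable_fst.div_const h)).prodMk measurable_snd
  have hjoint : ∀ c : ℤ → Ω → ℝ, (∀ k, Measurable (c k)) →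
      Measurable fun p : ℝ × Ω => c ⌊p.1 / h⌋ p.2 := fun c hc =>
    (measurable_from_prod_countable_right (f := fun p : ℤ × Ω => c p.1 p.2) hc).comp hfl
  have hexp : Measurable (Function.uncurry fun (s : ℝ) (ω : Ω) => ∫ u in s..T, a ⌊u / h⌋ ω) := by
    refine measurable_uncurry_of_continuous_of_measurable (fun ω => ?_) (fun s => ?_)
    · simp_rw [fun s => intervalIntegral.integral_symm (f := fun u => a ⌊u / h⌋ ω)
        (μ := volume) T s]
      exact (intervalIntegral.continuous_primitive
        (step_intervalIntegrable hh fun k => a k ω) T).neg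
    · have h1 : StronglyMeasurable fun p : Ω × ℝ => a ⌊p.2 / h⌋ p.1 :=
        ((hjoint a ha).comp measurable_swap).stronglyMeasurable
      simp_rw [intervalIntegral]
      exact (h1.integral_prod_right'.sub h1.integral_prod_right').measurable
  exact ((Real.measurable_exp.comp hexp).mul (hjoint g hg)).ennreal_ofReal

end Assembly

/-- **A priori moment bound for the nonlinearity-truncated scheme (Corollary 2.6),**
stated for a bounded diagonal operator on a separable real Hilbert space `H` with
orthonormal basis `(bᵢ)` and eigenvalues `(λᵢ)` bounded above and bounded below away
from `0`.  Under the generalized coercivity condition (a), the local Lipschitz-type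
condition (b), the growth condition (c), and the truncated-scheme integral equation (d),
`Y − O` is a stochastic process with continuous sample paths and, with
`K = θ(1+√θ)^{2+ϑ} h^{min{2ϱ, 2−2α−ϑχ} − 2ρ − (2+ϑ)χ} / ((1/2 − ϕ/2)(1−α−ρ)^{2+ϑ})`,
the `L^p`-norm of `sup_{t∈[0,T]} ‖Y_t − O_t‖` is bounded by the stated quantities
(the `L^q`-norms are interpreted as `[0,∞]`-valued). -/
theorem apriori_moment_bound_truncated_scheme
    {I H : Type*} [NormedAddCommGroup H] [InnerProductSpace ℝ H] [CompleteSpace H]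
    [TopologicalSpace.SeparableSpace H] [MeasurableSpace H] [BorelSpace H]
    {Ω : Type*} [MeasurableSpace Ω] (P : Measure Ω) [IsProbabilityMeasure P]
    (b : HilbertBasis I ℝ H) (lam : I → ℝ)
    (hlam_lb : ∃ c : ℝ, 0 < c ∧ ∀ i, c ≤ lam i)
    (hlam_ub : ∃ C : ℝ, ∀ i, lam i ≤ C)
    (T : ℝ) (hT : 0 < T)
    (O : ℝ → Ω → H) (hOmeas : ∀ t ∈ Set.Icc (0:ℝ) T, Measurable (O t))
    (Y : ℝ → Ω → H)
    (F : H → H) (hF : Continuous F)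
    (φ Φ : H → ℝ) (hφm : Measurable φ) (hΦm : Measurable Φ)
    (hφ0 : ∀ v, 0 ≤ φ v) (hΦ0 : ∀ v, 0 ≤ Φ v)
    (ϕ α ρ ϱ θ ϑ χ h p : ℝ)
    (hϕ : ϕ ∈ Set.Ico (0:ℝ) 1) (hα : α ∈ Set.Icc (0:ℝ) (1/2))
    (hρ : ρ ∈ Set.Ico (0:ℝ) (1 - α)) (hϱ : ϱ ∈ Set.Icc ρ (ρ + 1))
    (hθ : 0 ≤ θ) (hϑ : 0 ≤ ϑ)
    (hχ : χ ∈ Set.Icc (0:ℝ) ((2 - 2 * α - 2 * ρ) / (2 + ϑ)))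
    (hh : h ∈ Set.Ioc (0:ℝ) 1) (hp : 2 ≤ p)
    (hcoer : ∀ v w : H, ⟪v, F (v + w)⟫ ≤
      1 / 2 * φ w * ‖v‖ ^ 2 + ϕ * diagNorm (fun i => b i) lam (1/2) v ^ 2 + 1 / 2 * Φ w)
    (hlip : ∀ v w : H, diagNorm (fun i => b i) lam (-(1/2)) (F v - F w) ^ 2 ≤
      θ * max 1 (diagNorm (fun i => b i) lam ϱ v ^ ϑ)
          * diagNorm (fun i => b i) lam ρ (v - w) ^ 2
        + θ * diagNorm (fun i => b i) lam ρ (v - w) ^ (2 + ϑ))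
    (hgrowth : ∀ v : H, diagNorm (fun i => b i) lam (-α) (F v) ^ 2 ≤
      θ * max 1 (diagNorm (fun i => b i) lam ϱ v ^ (2 + ϑ)))
    (hInt : ∀ ω : Ω, ∀ t ∈ Set.Icc (0:ℝ) T, IntervalIntegrable (fun s =>
        if diagNorm (fun i => b i) lam ϱ (Y (h * (⌊s / h⌋ : ℝ)) ω)
            + diagNorm (fun i => b i) lam ϱ (O (h * (⌊s / h⌋ : ℝ)) ω) ≤ h ^ (-χ)
        then diagSemigroup (fun i => b i) lam (t - s) (F (Y (h * (⌊s / h⌋ : ℝ)) ω))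
        else 0) volume 0 t)
    (heq : ∀ ω : Ω, ∀ t ∈ Set.Icc (0:ℝ) T,
      Y t ω = (∫ s in (0:ℝ)..t,
            if diagNorm (fun i => b i) lam ϱ (Y (h * (⌊s / h⌋ : ℝ)) ω)
                + diagNorm (fun i => b i) lam ϱ (O (h * (⌊s / h⌋ : ℝ)) ω) ≤ h ^ (-χ)
            then diagSemigroup (fun i => b i) lam (t - s) (F (Y (h * (⌊s / h⌋ : ℝ)) ω))
            else 0)
        + O t ω) :
    (∀ t ∈ Set.Icc (0:ℝ) T, Measurable (fun ω => Y t ω - O t ω))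
    ∧ (∀ ω : Ω, ContinuousOn (fun t => Y t ω - O t ω) (Set.Icc (0:ℝ) T))
    ∧ ∀ K : ℝ,
        K = θ * (1 + Real.sqrt θ) ^ (2 + ϑ)
              * h ^ (min (2 * ϱ) (2 - 2 * α - ϑ * χ) - 2 * ρ - (2 + ϑ) * χ)
            / ((1 / 2 - ϕ / 2) * (1 - α - ρ) ^ (2 + ϑ)) →
        ((∫⁻ ω, (ENNReal.ofReal (⨆ t : Set.Icc (0:ℝ) T, ‖Y (t : ℝ) ω - O (t : ℝ) ω‖)) ^ p ∂P)
            ^ (1 / p)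
          ≤ (∫⁻ s in Set.Ioc (0:ℝ) T,
              (∫⁻ ω, (ENNReal.ofReal
                  (Real.exp (∫ u in s..T, φ (O (h * (⌊u / h⌋ : ℝ)) ω))
                    * (Φ (O (h * (⌊s / h⌋ : ℝ)) ω) + K))) ^ (p / 2) ∂P) ^ (2 / p))
            ^ ((1:ℝ) / 2))
        ∧ ((∫⁻ s in Set.Ioc (0:ℝ) T,
              (∫⁻ ω, (ENNReal.ofReal
                  (Real.exp (∫ u in s..T, φ (O (h * (⌊u / h⌋ : ℝ)) ω))
                    * (Φ (O (h * (⌊s / h⌋ : ℝ)) ω) + K))) ^ (p / 2) ∂P) ^ (2 / p))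
            ^ ((1:ℝ) / 2)
          ≤ ((1 + ENNReal.ofReal K) * ∫⁻ s in Set.Ioc (0:ℝ) T,
              (∫⁻ ω, ENNReal.ofReal
                  (Real.exp (p / 2 * ∫ u in s..T, φ (O (h * (⌊u / h⌋ : ℝ)) ω))
                    * max 1 (|Φ (O (h * (⌊s / h⌋ : ℝ)) ω)| ^ (p / 2))) ∂P) ^ (2 / p))
            ^ ((1:ℝ) / 2)) := by
  have : SecondCountableTopology H := UniformSpace.secondCountable_of_separable H
  obtain ⟨A, B, hA, hB, -, hBA, hAq⟩ := exists_generator b lam hlam_lb hlam_ub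
  obtain ⟨hh0, hh1⟩ := hh
  set f : Ω → ℤ → H := fun ω k =>
    if diagNorm (fun i => b i) lam ϱ (Y (h * (k : ℝ)) ω)
      + diagNorm (fun i => b i) lam ϱ (O (h * (k : ℝ)) ω) ≤ h ^ (-χ)
    then F (Y (h * (k : ℝ)) ω) else 0 with hf
  have hconv : ∀ ω t s, (if diagNorm (fun i => b i) lam ϱ (Y (h * (⌊s / h⌋ : ℝ)) ω)
        + diagNorm (fun i => b i) lam ϱ (O (h * (⌊s / h⌋ : ℝ)) ω) ≤ h ^ (-χ)
      then diagSemigroup (fun i => b i) lam (t - s) (F (Y (h * (⌊s / h⌋ : ℝ)) ω))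
      else 0) = expGroup A (t - s) (f ω ⌊s / h⌋) := by
    intro ω t s
    simp only [hf]
    split_ifs
    · exact diagSemigroup_eq b lam A hA _ _
    · simp
  simp only [hconv] at hInt heq
  have hX : ∀ ω, ∀ t ∈ Set.Icc 0 T,
      Y t ω - O t ω = ∫ s in (0:ℝ)..t, expGroup A (t - s) (f ω ⌊s / h⌋) := by
    intro ω t ht
    rw [heq ω t ht, add_sub_cancel_right]
  have hmild := fun ω => mild_properties A B hBA hh0 hT (f ω) (fun t => Y t ω - O t ω)
    (hInt ω T ⟨hT.le, le_rfl⟩) (hX ω)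
  have hX0 : ∀ ω, Y 0 ω - O 0 ω = 0 := fun ω => by
    rw [hX ω 0 ⟨le_rfl, hT.le⟩, intervalIntegral.integral_same]
  have hNc := diagNorm_continuous b lam hlam_lb hlam_ub ϱ
  -- Measurability propagates from one cell of the time grid to the next.
  have hmeas : ∀ n : ℕ, ∀ t ∈ Set.Icc (0:ℝ) T, t ≤ h * n →
      Measurable (fun ω => Y t ω - O t ω) := by
    intro n
    induction n with
    | zero =>
      intro t ht htn
      have : t = 0 := le_antisymm (by simpa using htn) ht.1
      subst this
      simp only [hX0]
      exact measurable_const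
    | succ n ih =>
      intro t ht htn
      rcases le_total t (h * n) with hle | hle
      · exact ih t ht hle
      have hn : h * (n : ℝ) ∈ Set.Icc (0:ℝ) T := ⟨by positivity, hle.trans ht.2⟩
      have hXn := ih _ hn le_rfl
      have hOn := hOmeas _ hn
      have hYn : Measurable (fun ω => Y (h * (n : ℝ)) ω) := by
        have h1 : (fun ω => Y (h * (n : ℝ)) ω) = fun ω =>
            (Y (h * (n : ℝ)) ω - O (h * (n : ℝ)) ω) + O (h * (n : ℝ)) ω := by
          ext ω
          rw [sub_add_cancel]
        rw [h1]
        exact hXn.add hOn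
      have hfn : Measurable (fun ω => f ω (n : ℤ)) := by
        simp only [hf, Int.cast_natCast]
        refine Measurable.ite (measurableSet_le ?_ measurable_const) (hF.measurable.comp hYn)
          measurable_const
        exact (hNc.measurable.comp hYn).add (hNc.measurable.comp hOn)
      have hcell : ∀ ω, Y t ω - O t ω = _ := fun ω =>
        (hmild ω).2.2 (n : ℤ) (by positivity) t
          ⟨by simpa using hle, by simpa using htn⟩ ht.2
      simp only [Int.cast_natCast] at hcell
      simp_rw [hcell]
      exact ((expGroup A _).measurable.comp hXn).add
        (B.measurable.comp (((expGroup A _).measurable.comp hfn).sub hfn))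
  refine ⟨fun t ht => ?_, fun ω => (hmild ω).1, ?_⟩
  · refine hmeas ⌈t / h⌉₊ t ht ?_
    have := Nat.le_ceil (t / h)
    rwa [div_le_iff₀' hh0] at this
  intro K hK
  have hd : 0 < 1 - α - ρ := by linarith [hρ.2]
  have hK0 : 0 ≤ K := by
    rw [hK]
    have h1 : 0 < 1 / 2 - ϕ / 2 := by linarith [hϕ.2]
    positivity
  have hp0 : 0 < p := by linarith
  constructor
  · have hpath : ∀ ω, ENNReal.ofReal (⨆ t : Set.Icc (0:ℝ) T, ‖Y (t : ℝ) ω - O (t : ℝ) ω‖) ≤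
        (∫⁻ s in Set.Ioc (0:ℝ) T, ENNReal.ofReal
          (Real.exp (∫ u in s..T, φ (O (h * (⌊u / h⌋ : ℝ)) ω))
            * (Φ (O (h * (⌊s / h⌋ : ℝ)) ω) + K))) ^ ((1:ℝ) / 2) := by
      intro ω
      have hb := fun t (ht : t ∈ Set.Icc 0 T) => path_bound b lam hlam_lb hlam_ub A B hA hB hAq F
        φ Φ hφ0 hΦ0 hϕ hα hρ hϱ hθ hϑ hχ ⟨hh0, hh1⟩ hcoer hlip hgrowth (fun t => Y t ω)
        (fun t => O t ω) (f ω) (fun k => rfl) (hmild ω).1 (hmild ω).2.1 (hmild ω).2.2 (hX0 ω)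
        K hK0 hK ht
      have hi := gronwall_integrand_intervalIntegrable hh0 (fun k => φ (O (h * (k : ℝ)) ω))
        (fun k => Φ (O (h * (k : ℝ)) ω) + K) T 0 T
      rw [intervalIntegrable_iff, Set.uIoc_of_le hT.le] at hi
      rw [← ofReal_integral_eq_lintegral_ofReal hi
        (Filter.Eventually.of_forall fun s =>
          mul_nonneg (Real.exp_pos _).le (add_nonneg (hΦ0 _) hK0)),
        ← intervalIntegral.integral_of_le hT.le,
        ENNReal.ofReal_rpow_of_nonneg ((sq_nonneg _).trans (hb 0 ⟨le_rfl, hT.le⟩)) (by norm_num),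
        ← Real.sqrt_eq_rpow]
      refine ENNReal.ofReal_le_ofReal ?_
      have : Nonempty (Set.Icc (0:ℝ) T) := ⟨⟨0, le_rfl, hT.le⟩⟩
      exact ciSup_le fun t => Real.le_sqrt_of_sq_le (hb t t.2)
    -- Outside `[0, T]` nothing is known about `O`; the extension by zero is measurable.
    set O' : ℤ → Ω → H := fun k ω => if h * (k : ℝ) ∈ Set.Icc (0:ℝ) T then O (h * (k : ℝ)) ω else 0
      with hO'
    have hO'm : ∀ k, Measurable (O' k) := by
      intro k
      by_cases hk : h * (k : ℝ) ∈ Set.Icc (0:ℝ) T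
      · simp only [hO', hk, if_true]
        exact hOmeas _ hk
      · simp only [hO', hk, if_false]
        exact measurable_const
    have hO'eq : ∀ s ∈ Set.Icc (0:ℝ) T, ∀ ω, O' ⌊s / h⌋ ω = O (h * (⌊s / h⌋ : ℝ)) ω := by
      intro s hs ω
      have h1 := Int.floor_le (s / h)
      rw [le_div_iff₀' hh0] at h1
      have h2 : (0:ℝ) ≤ (⌊s / h⌋ : ℝ) := by
        exact_mod_cast Int.floor_nonneg.2 (div_nonneg hs.1 hh0.le)
      exact if_pos ⟨by positivity, h1.trans hs.2⟩
    set Q : ℝ → Ω → ℝ≥0∞ := fun s ω => ENNReal.ofReal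
      (Real.exp (∫ u in s..T, φ (O' ⌊u / h⌋ ω)) * (Φ (O' ⌊s / h⌋ ω) + K)) with hQ
    have hQm : Measurable (Function.uncurry Q) :=
      measurable_integrand hh0 T (fun k ω => φ (O' k ω)) (fun k ω => Φ (O' k ω) + K)
        (fun k => hφm.comp (hO'm k)) (fun k => (hΦm.comp (hO'm k)).add_const K)
    have hQeq : ∀ s ∈ Set.Ioc (0:ℝ) T, ∀ ω, ENNReal.ofReal
        (Real.exp (∫ u in s..T, φ (O (h * (⌊u / h⌋ : ℝ)) ω))
          * (Φ (O (h * (⌊s / h⌋ : ℝ)) ω) + K)) = Q s ω := by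
      intro s hs ω
      simp only [hQ]
      rw [hO'eq s ⟨hs.1.le, hs.2⟩ ω]
      congr 3
      refine intervalIntegral.integral_congr fun u hu => ?_
      rw [Set.uIcc_of_le hs.2] at hu
      simp only [hO'eq u ⟨hs.1.le.trans hu.1, hu.2⟩ ω]
    have hmink := minkowski_integral (volume.restrict (Set.Ioc (0:ℝ) T)) P Q hQm (p / 2)
      (by linarith)
    have hinner : ∀ ω, ∫⁻ s in Set.Ioc (0:ℝ) T, ENNReal.ofReal
          (Real.exp (∫ u in s..T, φ (O (h * (⌊u / h⌋ : ℝ)) ω))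
            * (Φ (O (h * (⌊s / h⌋ : ℝ)) ω) + K)) = ∫⁻ s in Set.Ioc (0:ℝ) T, Q s ω := fun ω =>
      setLIntegral_congr_fun measurableSet_Ioc fun s hs => hQeq s hs ω
    have houter : (∫⁻ s in Set.Ioc (0:ℝ) T,
              (∫⁻ ω, (ENNReal.ofReal
                  (Real.exp (∫ u in s..T, φ (O (h * (⌊u / h⌋ : ℝ)) ω))
                    * (Φ (O (h * (⌊s / h⌋ : ℝ)) ω) + K))) ^ (p / 2) ∂P) ^ (2 / p)) =
        ∫⁻ s in Set.Ioc (0:ℝ) T, (∫⁻ ω, Q s ω ^ (p / 2) ∂P) ^ (1 / (p / 2)) := by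
      refine setLIntegral_congr_fun measurableSet_Ioc fun s hs => ?_
      simp only [hQeq s hs]
      congr 1
      field_simp
    rw [houter]
    refine le_trans ?_ (ENNReal.rpow_le_rpow hmink (by norm_num))
    rw [← ENNReal.rpow_mul]
    have hexp : 1 / (p / 2) * ((1:ℝ) / 2) = 1 / p := by field_simp
    rw [hexp]
    refine ENNReal.rpow_le_rpow (lintegral_mono fun ω => ?_) (by positivity)
    have h1 := ENNReal.rpow_le_rpow (hpath ω) hp0.le
    rw [← ENNReal.rpow_mul, hinner] at h1
    refine h1.trans_eq ?_
    congr 1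
    ring
  · refine ENNReal.rpow_le_rpow ?_ (by norm_num)
    rw [← lintegral_const_mul' _ _ (by simp)]
    refine lintegral_mono fun s => ?_
    have hc : (1 + ENNReal.ofReal K) = ((1 + ENNReal.ofReal K) ^ (p / 2)) ^ (2 / p) := by
      rw [← ENNReal.rpow_mul]
      have : p / 2 * (2 / p) = 1 := by field_simp
      rw [this, ENNReal.rpow_one]
    have hctop : (1 + ENNReal.ofReal K) ^ (p / 2) ≠ ⊤ :=
      ENNReal.rpow_ne_top_of_nonneg (by positivity) (by simp)
    simp only
    rw [hc, ← ENNReal.mul_rpow_of_nonneg _ _ (by positivity), ← lintegral_const_mul' _ _ hctop]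
    refine ENNReal.rpow_le_rpow (lintegral_mono fun ω => ?_) (by positivity)
    simp only
    set a := ∫ u in s..T, φ (O (h * (⌊u / h⌋ : ℝ)) ω)
    set c := Φ (O (h * (⌊s / h⌋ : ℝ)) ω) with hcdef
    have hc0 : 0 ≤ c := hΦ0 _
    have h1 : ENNReal.ofReal (Real.exp a * (c + K)) ≤
        (1 + ENNReal.ofReal K) * ENNReal.ofReal (Real.exp a * max 1 c) := by
      rw [← ENNReal.ofReal_one, ← ENNReal.ofReal_add zero_le_one hK0,
        ← ENNReal.ofReal_mul (by positivity)]
      refine ENNReal.ofReal_le_ofReal ?_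
      have h2 : c + K ≤ (1 + K) * max 1 c := by
        nlinarith [le_max_left 1 c, le_max_right 1 c]
      calc Real.exp a * (c + K) ≤ Real.exp a * ((1 + K) * max 1 c) := by gcongr
        _ = _ := by ring
    refine (ENNReal.rpow_le_rpow h1 (by positivity : 0 ≤ p / 2)).trans_eq ?_
    rw [ENNReal.mul_rpow_of_nonneg _ _ (by positivity),
      ENNReal.ofReal_rpow_of_nonneg (by positivity) (by positivity),
      Real.mul_rpow (Real.exp_pos _).le (by positivity), ← Real.exp_mul, mul_comm a,
      abs_of_nonneg hc0]
    congr 4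
    rcases le_total 1 c with h2 | h2
    · rw [max_eq_right h2, max_eq_right (Real.one_le_rpow h2 (by positivity))]
    · rw [max_eq_left h2, max_eq_left (Real.rpow_le_one hc0 h2 (by positivity)), Real.one_rpow]
end

section
/- Uniform Vitali-type convergence theorem (Proposition 4.5): Let I be a non-empty set, let (Ω,F,P) be a probability space, let p ∈ (0,∞), let (V,‖·‖_V) be a separable normed real vector space, and let X⁰, X¹, X², ... : I×Ω → V be random fields (i.e., for each n ∈ ℕ₀ and i ∈ I the map ω ↦ Xⁿ_i(ω) is F/Borel-measurable) which satisfy limsup_{n→∞} sup_{i∈I} E[‖Xⁿ_i‖_V^p] < ∞ and, for every ε ∈ (0,∞), limsup_{n→∞} sup_{i∈I} P(‖X⁰_i − Xⁿ_i‖_V ≥ ε) = 0. Then for all q ∈ (0,p) it holds that limsup_{n→∞} sup_{i∈I} E[‖X⁰_i − Xⁿ_i‖_V^q] = 0, and moreover sup_{i∈I} E[‖X⁰_i‖_V^p] < ∞. -/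
/-!
Let `C` be a finite eventual bound of `sup_i E[‖Xⁿ_i‖^p]`. For fixed `i`, the sequence `Xⁿ_i`
converges to `X⁰_i` in measure, hence almost surely along a subsequence, and Fatou's lemma gives
`E[‖X⁰_i‖^p] ≤ C` (`lintegral_rpow_le_of_tendstoInMeasure`), uniformly in `i`. Consequently
`E[‖X⁰_i - Xⁿ_i‖^p] ≤ K := 2^p (C + C)` for all large `n` and all `i`. Splitting at the level `ε`
and applying Hölder's inequality on `{‖X⁰_i - Xⁿ_i‖ ≥ ε}` (`lintegral_rpow_le_split`) yields
`E[‖X⁰_i - Xⁿ_i‖^q] ≤ ε^q + K^(q/p) P(‖X⁰_i - Xⁿ_i‖ ≥ ε)^(1-q/p)`. Taking the supremum over `i`,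
letting `n → ∞` and then `ε → 0` gives the claim.
-/

open MeasureTheory Filter ENNReal
open scoped Topology

/-- Fatou's lemma for convergence in measure: the `p`-th moment of the limit is at most any
eventual bound of the `p`-th moments of the sequence. -/
lemma lintegral_rpow_le_of_tendstoInMeasure {Ω V : Type*} [MeasurableSpace Ω]
    [NormedAddCommGroup V] [MeasurableSpace V] [BorelSpace V]
    (P : Measure Ω) (p : ℝ) (f : ℕ → Ω → V) (g : Ω → V) (hf : ∀ n, Measurable (f n))
    (h : TendstoInMeasure P f atTop g) (C : ℝ≥0∞)
    (hC : ∀ᶠ n in atTop, ∫⁻ ω, (‖f n ω‖₊ : ℝ≥0∞) ^ p ∂P ≤ C) :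
    ∫⁻ ω, (‖g ω‖₊ : ℝ≥0∞) ^ p ∂P ≤ C := by
  obtain ⟨ns, hns, hae⟩ := h.exists_seq_tendsto_ae
  calc ∫⁻ ω, (‖g ω‖₊ : ℝ≥0∞) ^ p ∂P
      = ∫⁻ ω, liminf (fun k => (‖f (ns k) ω‖₊ : ℝ≥0∞) ^ p) atTop ∂P := by
        refine lintegral_congr_ae ?_
        filter_upwards [hae] with ω hω
        have h1 : Tendsto (fun k => (‖f (ns k) ω‖₊ : ℝ≥0∞)) atTop (𝓝 (‖g ω‖₊ : ℝ≥0∞)) :=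
          ENNReal.tendsto_coe.2 hω.nnnorm
        exact (((ENNReal.continuous_rpow_const (y := p)).tendsto _).comp h1).liminf_eq.symm
    _ ≤ liminf (fun k => ∫⁻ ω, (‖f (ns k) ω‖₊ : ℝ≥0∞) ^ p ∂P) atTop :=
        lintegral_liminf_le fun k => (hf (ns k)).nnnorm.coe_nnreal_ennreal.pow_const p
    _ ≤ C := by
        refine liminf_le_of_frequently_le' ?_
        exact (hns.tendsto_atTop.eventually hC).frequently

/-- Splitting at the level `ε` and Hölder's inequality with the conjugate exponents `p / q` and
`p / (p - q)` on the set where `ε ≤ Y`. -/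
lemma lintegral_rpow_le_split {Ω : Type*} [MeasurableSpace Ω]
    (P : Measure Ω) [IsProbabilityMeasure P] (Y : Ω → ℝ≥0∞) (hY : Measurable Y)
    (p q : ℝ) (hq : 0 < q) (hqp : q < p) (ε : ℝ≥0∞) :
    ∫⁻ ω, Y ω ^ q ∂P ≤
      ε ^ q + (∫⁻ ω, Y ω ^ p ∂P) ^ (q / p) * P {ω | ε ≤ Y ω} ^ (1 - q / p) := by
  have hp : 0 < p := hq.trans hqp
  set S : Set Ω := {ω | ε ≤ Y ω} with hS
  have hSm : MeasurableSet S := measurableSet_le measurable_const hY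
  have hpq : (p / q).HolderConjugate (p / (p - q)) := by
    rw [Real.holderConjugate_iff]
    have : 0 < p - q := by linarith
    constructor
    · rwa [one_lt_div hq]
    · field_simp
      ring
  have hH := ENNReal.lintegral_mul_le_Lp_mul_Lq P hpq
    (f := fun ω => Y ω ^ q) (g := S.indicator fun _ => 1)
    (hY.pow_const q).aemeasurable (measurable_const.indicator hSm).aemeasurable
  have e1 : ∀ ω, (Y ω ^ q) ^ (p / q) = Y ω ^ p := fun ω => by
    rw [← ENNReal.rpow_mul, mul_div_cancel₀ _ hq.ne']
  have hpos : 0 < p / (p - q) := by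
    have : 0 < p - q := by linarith
    positivity
  have e2 : ∀ ω, (S.indicator (fun _ => (1 : ℝ≥0∞)) ω) ^ (p / (p - q))
      = S.indicator (fun _ => (1 : ℝ≥0∞)) ω := fun ω => by
    by_cases h : ω ∈ S <;> simp [h, hpos]
  have e3 : 1 / (p / q) = q / p := one_div_div _ _
  have e4 : 1 / (p / (p - q)) = 1 - q / p := by
    rw [one_div_div, sub_div, div_self hp.ne']
  simp only [e1, e2, e3, e4, lintegral_indicator_const hSm, one_mul, Pi.mul_apply] at hH
  calc ∫⁻ ω, Y ω ^ q ∂P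
      ≤ ∫⁻ ω, (ε ^ q + Y ω ^ q * S.indicator (fun _ => 1) ω) ∂P := by
        refine lintegral_mono fun ω => ?_
        by_cases h : ω ∈ S
        · simp [h]
        · have : Y ω ≤ ε := le_of_lt (not_le.1 h)
          exact (ENNReal.rpow_le_rpow this hq.le).trans le_self_add
    _ = ε ^ q + ∫⁻ ω, Y ω ^ q * S.indicator (fun _ => 1) ω ∂P := by
        rw [lintegral_add_left measurable_const]
        simp
    _ ≤ _ := by gcongr

/-- The quasi-triangle inequality with constant `2 ^ p`, valid for every `p > 0`. -/
lemma nnnorm_sub_rpow_le {V : Type*} [NormedAddCommGroup V] (a b : V) (p : ℝ) (hp : 0 < p) :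
    (‖a - b‖₊ : ℝ≥0∞) ^ p ≤ 2 ^ p * ((‖a‖₊ : ℝ≥0∞) ^ p + (‖b‖₊ : ℝ≥0∞) ^ p) := by
  have h0 : (‖a - b‖₊ : ℝ≥0∞) ≤ ‖a‖₊ + ‖b‖₊ := mod_cast nnnorm_sub_le a b
  rcases le_total (‖a‖₊ : ℝ≥0∞) ‖b‖₊ with h | h
  · calc (‖a - b‖₊ : ℝ≥0∞) ^ p ≤ (2 * ‖b‖₊) ^ p := by
          refine ENNReal.rpow_le_rpow (h0.trans ?_) hp.le
          rw [two_mul]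
          gcongr
      _ = 2 ^ p * (‖b‖₊ : ℝ≥0∞) ^ p := ENNReal.mul_rpow_of_nonneg _ _ hp.le
      _ ≤ _ := by gcongr; exact le_add_self
  · calc (‖a - b‖₊ : ℝ≥0∞) ^ p ≤ (2 * ‖a‖₊) ^ p := by
          refine ENNReal.rpow_le_rpow (h0.trans ?_) hp.le
          rw [two_mul]
          gcongr
      _ = 2 ^ p * (‖a‖₊ : ℝ≥0∞) ^ p := ENNReal.mul_rpow_of_nonneg _ _ hp.le
      _ ≤ _ := by gcongr; exact le_self_add

/-- **Uniform Vitali-type convergence theorem (Proposition 4.5).**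
Let `X⁰, X¹, X², …` be `V`-valued random fields indexed by a non-empty set `I` over a
probability space, with `limsup_n sup_i E[‖Xⁿ_i‖^p] < ∞` and, for every `ε > 0`,
`limsup_n sup_i P(‖X⁰_i − Xⁿ_i‖ ≥ ε) = 0`. Then for every `q ∈ (0,p)` it holds that
`limsup_n sup_i E[‖X⁰_i − Xⁿ_i‖^q] = 0`, and `sup_i E[‖X⁰_i‖^p] < ∞`. -/
theorem vitali_uniform_convergence
    {I Ω V : Type*} [Nonempty I] [MeasurableSpace Ω]
    [NormedAddCommGroup V] [NormedSpace ℝ V] [TopologicalSpace.SeparableSpace V]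
    [MeasurableSpace V] [BorelSpace V]
    (P : Measure Ω) [IsProbabilityMeasure P]
    (p : ℝ) (hp : 0 < p)
    (X : ℕ → I → Ω → V) (hX : ∀ n i, Measurable (X n i))
    (hmom : Filter.limsup
        (fun n => ⨆ i, ∫⁻ ω, (‖X n i ω‖₊ : ℝ≥0∞) ^ p ∂P) Filter.atTop < ⊤)
    (hconv : ∀ ε : ℝ, 0 < ε →
      Filter.limsup (fun n => ⨆ i, P {ω | ε ≤ ‖X 0 i ω - X n i ω‖}) Filter.atTop = 0) :
    (∀ q : ℝ, 0 < q → q < p →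
      Filter.limsup
        (fun n => ⨆ i, ∫⁻ ω, (‖X 0 i ω - X n i ω‖₊ : ℝ≥0∞) ^ q ∂P) Filter.atTop = 0)
    ∧ (⨆ i, ∫⁻ ω, (‖X 0 i ω‖₊ : ℝ≥0∞) ^ p ∂P) < ⊤ := by
  have : SecondCountableTopology V := UniformSpace.secondCountable_of_separable V
  obtain ⟨C, hlC, hCtop⟩ := exists_between hmom
  have hC : ∀ᶠ n in atTop, ∀ i, ∫⁻ ω, (‖X n i ω‖₊ : ℝ≥0∞) ^ p ∂P ≤ C := by
    filter_upwards [eventually_lt_of_limsup_lt hlC] with n hn i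
    exact (le_iSup (fun i => ∫⁻ ω, (‖X n i ω‖₊ : ℝ≥0∞) ^ p ∂P) i).trans hn.le
  have hconv' : ∀ ε : ℝ, 0 < ε →
      Tendsto (fun n => ⨆ i, P {ω | ε ≤ ‖X 0 i ω - X n i ω‖}) atTop (𝓝 0) := fun ε hε =>
    tendsto_of_le_liminf_of_limsup_le bot_le (hconv ε hε).le
  have hX0 : ∀ i, ∫⁻ ω, (‖X 0 i ω‖₊ : ℝ≥0∞) ^ p ∂P ≤ C := by
    intro i
    refine lintegral_rpow_le_of_tendstoInMeasure P p (fun n => X n i) (X 0 i) (fun n => hX n i)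
      ?_ C (hC.mono fun n hn => hn i)
    rw [tendstoInMeasure_iff_norm]
    intro ε hε
    refine tendsto_of_tendsto_of_tendsto_of_le_of_le tendsto_const_nhds (hconv' ε hε)
      (fun _ => bot_le) fun n => ?_
    simp only [norm_sub_rev (X n i _)]
    exact le_iSup (fun i => P {ω | ε ≤ ‖X 0 i ω - X n i ω‖}) i
  refine ⟨fun q hq hqp => ?_, (iSup_le hX0).trans_lt hCtop⟩
  set K : ℝ≥0∞ := 2 ^ p * (C + C) with hK
  have hKtop : K ≠ ⊤ := ENNReal.mul_ne_top
    (ENNReal.rpow_ne_top_of_nonneg hp.le (by simp)) (ENNReal.add_ne_top.2 ⟨hCtop.ne, hCtop.ne⟩)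
  have hdiff : ∀ᶠ n in atTop, ∀ i, ∫⁻ ω, (‖X 0 i ω - X n i ω‖₊ : ℝ≥0∞) ^ p ∂P ≤ K := by
    filter_upwards [hC] with n hn i
    calc ∫⁻ ω, (‖X 0 i ω - X n i ω‖₊ : ℝ≥0∞) ^ p ∂P
        ≤ ∫⁻ ω, 2 ^ p * ((‖X 0 i ω‖₊ : ℝ≥0∞) ^ p + (‖X n i ω‖₊ : ℝ≥0∞) ^ p) ∂P :=
          lintegral_mono fun ω => nnnorm_sub_rpow_le _ _ p hp
      _ = 2 ^ p * (∫⁻ ω, (‖X 0 i ω‖₊ : ℝ≥0∞) ^ p ∂P + ∫⁻ ω, (‖X n i ω‖₊ : ℝ≥0∞) ^ p ∂P) := by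
          have m : ∀ n, Measurable fun ω => (‖X n i ω‖₊ : ℝ≥0∞) ^ p := fun n =>
            (hX n i).nnnorm.coe_nnreal_ennreal.pow_const p
          rw [lintegral_const_mul _ (by exact (m 0).add (m n)), lintegral_add_left (m 0)]
      _ ≤ K := by
          rw [hK]
          gcongr
          · exact hX0 i
          · exact hn i
  have hs : 0 < 1 - q / p := sub_pos.2 ((div_lt_one hp).2 hqp)
  have key : ∀ ε : ℝ, 0 < ε → limsup
      (fun n => ⨆ i, ∫⁻ ω, (‖X 0 i ω - X n i ω‖₊ : ℝ≥0∞) ^ q ∂P) atTop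
        ≤ ENNReal.ofReal ε ^ q := by
    intro ε hε
    have hlim : Tendsto (fun n => ENNReal.ofReal ε ^ q + K ^ (q / p) *
        (⨆ i, P {ω | ε ≤ ‖X 0 i ω - X n i ω‖}) ^ (1 - q / p)) atTop
        (𝓝 (ENNReal.ofReal ε ^ q)) := by
      have h1 : Tendsto (fun n => (⨆ i, P {ω | ε ≤ ‖X 0 i ω - X n i ω‖}) ^ (1 - q / p))
          atTop (𝓝 0) := by
        have := ((ENNReal.continuous_rpow_const (y := 1 - q / p)).tendsto 0).comp (hconv' ε hε)
        rwa [ENNReal.zero_rpow_of_pos hs] at this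
      have h2 := ENNReal.Tendsto.const_mul (a := K ^ (q / p)) h1
        (Or.inr (ENNReal.rpow_ne_top_of_nonneg (by positivity) hKtop))
      simpa using h2.const_add (ENNReal.ofReal ε ^ q)
    rw [← hlim.limsup_eq]
    refine limsup_le_limsup ?_
    filter_upwards [hdiff] with n hn
    refine iSup_le fun i => ?_
    refine (lintegral_rpow_le_split P (fun ω => (‖X 0 i ω - X n i ω‖₊ : ℝ≥0∞))
      ((hX 0 i).sub (hX n i)).nnnorm.coe_nnreal_ennreal p q hq hqp (ENNReal.ofReal ε)).trans ?_
    have hset : {ω | ENNReal.ofReal ε ≤ (‖X 0 i ω - X n i ω‖₊ : ℝ≥0∞)}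
        = {ω | ε ≤ ‖X 0 i ω - X n i ω‖} := by
      ext ω
      simp only [Set.mem_ofPred_eq]
      rw [← enorm_eq_nnnorm, ← ofReal_norm, ENNReal.ofReal_le_ofReal_iff (norm_nonneg _)]
    rw [hset]
    gcongr
    · exact hn i
    · exact le_iSup (fun i => P {ω | ε ≤ ‖X 0 i ω - X n i ω‖}) i
  have hε0 : Tendsto (fun ε : ℝ => ENNReal.ofReal ε ^ q) (𝓝[>] 0) (𝓝 0) := by
    have h : Continuous fun ε : ℝ => ENNReal.ofReal ε ^ q :=
      ENNReal.continuous_rpow_const.comp ENNReal.continuous_ofReal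
    have := (h.tendsto 0).mono_left (nhdsWithin_le_nhds (s := Set.Ioi 0))
    simpa [ENNReal.zero_rpow_of_pos hq] using this
  refine le_antisymm (ge_of_tendsto hε0 ?_) bot_le
  filter_upwards [self_mem_nhdsWithin] with ε hε using key ε hε
end

section
/- Measurability and right-continuity for the recursively defined approximation (Lemma 2.3): Let (V,‖·‖_V) be a separable real Banach space, let (Ω,F,P) be a probability space, let (S_t)_{t≥0} be a strongly continuous semigroup of bounded linear operators on V (S_0 = Id_V, S_{t+s} = S_t ∘ S_s, and t ↦ S_t v continuous for each v ∈ V) with sup_{s∈[0,T]} ‖S_s‖_{L(V)} < ∞, let T, h ∈ (0,∞), let O : [0,T]×Ω → V be a stochastic process (each O_t is F/Borel-measurable), let F : V×V → V be Borel measurable, and let Y : [0,T]×Ω → V satisfy for all t ∈ [0,T] and ω ∈ Ω that Y_t(ω) = ∫₀ᵗ S_{t−s}( F(Y_{⌊s⌋_h}(ω), O_{⌊s⌋_h}(ω)) ) ds + O_t(ω) (a Bochner integral, which exists since the integrand is piecewise constant in s composed with the strongly continuous semigroup). Then Y : [0,T]×Ω → V is a stochastic process (each Y_t is F/Borel-measurable),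 and Y − O : [0,T]×Ω → V is a stochastic process all of whose sample paths t ↦ Y_t(ω) − O_t(ω) are right-continuous. -/
/-!
Write `x k ω = F (Y (h k) ω, O (h k) ω)` for `k : ℤ`, so that the integrand is
`S (t - s) (x ⌊s / h⌋ ω)`.

Measurability. The map `(r, v) ↦ S (max r 0) v` is continuous in `r` and in `v` separately, hence
jointly measurable (`measurable_semigroup`). For `0 < s < t` only the grid points `h k` with
`0 ≤ k` and `h k < t` enter the integral, so if `Y` is measurable at these grid points, the
integrand is jointly measurable in `(ω, s)` and the integral is measurable in `ω`
(`measurable_convolution`). Induction on `n` with `t ≤ n h` then gives measurability of every `Y t`.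

Right-continuity. For a fixed `ω` the function `s ↦ x ⌊s / h⌋ ω` takes finitely many values on
`[0, T]`, so it is bounded there. The convolution up to time `u` is the integral over `(0, T]` of
`1_{s < u} S (max (u - s) 0) (x ⌊s / h⌋ ω)`, and dominated convergence applies as `u ↓ t`
(`tendsto_convolution`).
-/

open MeasureTheory Filter

/-- Clamping the time at `0` makes the time dependence continuous on all of `ℝ`. -/
lemma continuous_semigroup_max {V : Type*} [NormedAddCommGroup V] [NormedSpace ℝ V]
    {S : ℝ → V →L[ℝ] V} (hScont : ∀ v : V, ContinuousOn (fun t => S t v) (Set.Ici (0:ℝ)))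
    (v : V) : Continuous (fun r : ℝ => S (max r 0) v) :=
  (hScont v).comp_continuous (by fun_prop) (fun r => le_max_right r 0)

/-- A Carathéodory function (continuous in time, measurable in space) is jointly measurable. -/
lemma measurable_semigroup {V : Type*} [NormedAddCommGroup V] [NormedSpace ℝ V]
    [TopologicalSpace.SeparableSpace V] [MeasurableSpace V] [BorelSpace V]
    {S : ℝ → V →L[ℝ] V} (hScont : ∀ v : V, ContinuousOn (fun t => S t v) (Set.Ici (0:ℝ))) :
    Measurable (fun p : ℝ × V => S (max p.1 0) p.2) :=
  measurable_uncurry_of_continuous_of_measurable (u := fun (r : ℝ) (v : V) => S (max r 0) v)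
    (continuous_semigroup_max hScont) (fun r => (S (max r 0)).continuous.measurable)

lemma measurable_convolution {V : Type*} [NormedAddCommGroup V] [NormedSpace ℝ V]
    [TopologicalSpace.SeparableSpace V] [MeasurableSpace V] [BorelSpace V]
    {Ω : Type*} [MeasurableSpace Ω] {h : ℝ} (hh : 0 < h)
    {S : ℝ → V →L[ℝ] V} (hScont : ∀ v : V, ContinuousOn (fun t => S t v) (Set.Ici (0:ℝ)))
    {t : ℝ} (ht : 0 ≤ t) (x : ℤ → Ω → V)
    (hx : ∀ k : ℤ, 0 ≤ k → h * (k : ℝ) < t → Measurable (x k)) :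
    Measurable (fun ω => ∫ s in (0:ℝ)..t, S (t - s) (x ⌊s / h⌋ ω)) := by
  classical
  have : SecondCountableTopology V := UniformSpace.secondCountable_of_separable V
  -- Grid values that do not enter the integral are replaced by `0`.
  let z : Ω × ℤ → V := fun p => if 0 ≤ p.2 ∧ h * (p.2 : ℝ) < t then x p.2 p.1 else 0
  have hz : Measurable z := by
    refine measurable_from_prod_countable_left fun k => ?_
    by_cases hk : 0 ≤ k ∧ h * (k : ℝ) < t
    · simpa [z, hk] using hx k hk.1 hk.2
    · simp [z, hk]
  have hfl : Measurable (fun p : Ω × ℝ => (p.1, ⌊p.2 / h⌋)) :=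
    measurable_fst.prodMk (Int.measurable_floor.comp (measurable_snd.div_const h))
  have hG : Measurable (fun p : Ω × ℝ => S (max (t - p.2) 0) (z (p.1, ⌊p.2 / h⌋))) :=
    (measurable_semigroup hScont).comp
      ((measurable_const.sub measurable_snd).prodMk (hz.comp hfl))
  have hI := (hG.stronglyMeasurable.integral_prod_right'
    (ν := volume.restrict (Set.Ioo 0 t))).measurable
  convert hI using 2 with ω
  rw [intervalIntegral.integral_of_le ht, integral_Ioc_eq_integral_Ioo]
  refine setIntegral_congr_fun measurableSet_Ioo fun s hs => ?_
  have h1 : (0:ℤ) ≤ ⌊s / h⌋ := Int.floor_nonneg.2 (div_nonneg hs.1.le hh.le)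
  have h2 : h * (⌊s / h⌋ : ℝ) < t := by
    have := Int.floor_le (s / h)
    rw [le_div_iff₀ hh] at this
    linarith [hs.2]
  simp only [z, h1, h2, and_self, if_true]
  rw [max_eq_left (by linarith [hs.2])]

lemma tendsto_convolution {V : Type*} [NormedAddCommGroup V] [NormedSpace ℝ V]
    [TopologicalSpace.SeparableSpace V] {T h : ℝ} (hh : 0 < h)
    {S : ℝ → V →L[ℝ] V} (hScont : ∀ v : V, ContinuousOn (fun t => S t v) (Set.Ici (0:ℝ)))
    (hSbdd : ∃ C : ℝ, ∀ s ∈ Set.Icc (0:ℝ) T, ‖S s‖ ≤ C) (x : ℤ → V)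
    {t : ℝ} (ht : t ∈ Set.Ico (0:ℝ) T) :
    Tendsto (fun u => ∫ s in (0:ℝ)..u, S (u - s) (x ⌊s / h⌋)) (nhdsWithin t (Set.Ioi t))
      (nhds (∫ s in (0:ℝ)..t, S (t - s) (x ⌊s / h⌋))) := by
  borelize V
  have : SecondCountableTopology V := UniformSpace.secondCountable_of_separable V
  obtain ⟨C, hC⟩ := hSbdd
  obtain ⟨B, hB⟩ : ∃ B, ∀ k ∈ Set.Icc (0:ℤ) ⌊T / h⌋, ‖x k‖ ≤ B := by
    obtain ⟨B, hB⟩ := ((Set.finite_Icc (0:ℤ) ⌊T / h⌋).image fun k => ‖x k‖).bddAbove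
    exact ⟨B, fun k hk => hB ⟨k, hk, rfl⟩⟩
  have hC0 : 0 ≤ C := (norm_nonneg _).trans (hC 0 ⟨le_rfl, ht.1.trans ht.2.le⟩)
  let Ψ : ℝ → ℝ → V := fun u => (Set.Iio u).indicator fun s => S (max (u - s) 0) (x ⌊s / h⌋)
  have hΨ : ∀ u ∈ Set.Icc (0:ℝ) T,
      ∫ s in (0:ℝ)..u, S (u - s) (x ⌊s / h⌋) = ∫ s in Set.Ioc 0 T, Ψ u s := by
    intro u hu
    have hset : Set.Ioc 0 T ∩ Set.Iio u = Set.Ioo 0 u := by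
      ext s
      simp only [Set.mem_inter_iff, Set.mem_Ioc, Set.mem_Iio, Set.mem_Ioo]
      exact ⟨fun H => ⟨H.1.1, H.2⟩, fun H => ⟨⟨H.1, H.2.le.trans hu.2⟩, H.2⟩⟩
    rw [intervalIntegral.integral_of_le hu.1, integral_Ioc_eq_integral_Ioo,
      setIntegral_indicator measurableSet_Iio, hset]
    refine setIntegral_congr_fun measurableSet_Ioo fun s hs => ?_
    rw [max_eq_left (by linarith [hs.2])]
  have hmeas : ∀ u, AEStronglyMeasurable (Ψ u) (volume.restrict (Set.Ioc 0 T)) := by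
    intro u
    have hx : Measurable fun s : ℝ => x ⌊s / h⌋ :=
      (measurable_of_countable x).comp (Int.measurable_floor.comp (measurable_id.div_const h))
    have : Measurable fun s : ℝ => S (max (u - s) 0) (x ⌊s / h⌋) :=
      (measurable_semigroup hScont).comp ((measurable_const.sub measurable_id).prodMk hx)
    exact (this.indicator measurableSet_Iio).aestronglyMeasurable
  have hnear : ∀ᶠ u in nhdsWithin t (Set.Ioi t), u ∈ Set.Icc (0:ℝ) T := by
    filter_upwards [Ioo_mem_nhdsGT ht.2] with u hu
    exact ⟨ht.1.trans hu.1.le, hu.2.le⟩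
  rw [hΨ t ⟨ht.1, ht.2.le⟩]
  refine Tendsto.congr' (f₁ := fun u => ∫ s in Set.Ioc 0 T, Ψ u s)
    (hnear.mono fun u hu => (hΨ u hu).symm) ?_
  refine tendsto_integral_filter_of_dominated_convergence (fun _ => C * B)
    (Eventually.of_forall hmeas) ?_ (integrable_const _) ?_
  · filter_upwards [hnear] with u hu
    filter_upwards [ae_restrict_mem measurableSet_Ioc] with s hs
    have hk : ⌊s / h⌋ ∈ Set.Icc (0:ℤ) ⌊T / h⌋ :=
      ⟨Int.floor_nonneg.2 (div_nonneg hs.1.le hh.le),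
        Int.floor_le_floor (div_le_div_of_nonneg_right hs.2 hh.le)⟩
    refine (norm_indicator_le_norm_self _ _).trans (((S _).le_opNorm _).trans ?_)
    exact mul_le_mul (hC _ ⟨le_max_right _ _, max_le (by linarith [hs.1, hu.2])
      (hu.1.trans hu.2)⟩) (hB _ hk) (norm_nonneg _) hC0
  -- Pointwise convergence can fail only at the null set `{t}`, where the indicator jumps.
  · have hne : ∀ᵐ s ∂(volume.restrict (Set.Ioc 0 T)), s ≠ t :=
      ae_restrict_of_ae (by simp [ae_iff])
    filter_upwards [hne] with s hs
    have hcont : Tendsto (fun u => S (max (u - s) 0) (x ⌊s / h⌋)) (nhds t)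
        (nhds (S (max (t - s) 0) (x ⌊s / h⌋))) :=
      ((continuous_semigroup_max hScont (x ⌊s / h⌋)).comp
        (continuous_id.sub continuous_const)).tendsto t
    refine Tendsto.mono_left ?_ nhdsWithin_le_nhds
    rcases lt_or_gt_of_ne hs with hlt | hgt
    · have h1 : Ψ t s = S (max (t - s) 0) (x ⌊s / h⌋) :=
        Set.indicator_of_mem (Set.mem_Iio.2 hlt) fun s => S (max (t - s) 0) (x ⌊s / h⌋)
      rw [h1]
      refine hcont.congr' ?_
      filter_upwards [Ioi_mem_nhds hlt] with u hu
      exact (Set.indicator_of_mem (Set.mem_Iio.2 hu) fun s => S (max (u - s) 0) (x ⌊s / h⌋)).symm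
    · have h1 : Ψ t s = 0 := Set.indicator_of_notMem (by simpa using hgt.le) _
      rw [h1]
      refine tendsto_const_nhds.congr' ?_
      filter_upwards [Iio_mem_nhds hgt] with u hu
      exact (Set.indicator_of_notMem (by simpa using le_of_lt hu) _).symm

/-- **Measurability and right-continuity for the recursively defined approximation
(Lemma 2.3).** Let `(S_t)_{t≥0}` be a strongly continuous semigroup of bounded linear
operators on a separable real Banach space `V`, uniformly bounded on `[0,T]`, let
`O : [0,T] × Ω → V` be a stochastic process, let `F : V × V → V` be Borel measurable,
let `h ∈ (0,∞)`, and let `Y : [0,T] × Ω → V` satisfy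
`Y_t(ω) = ∫₀ᵗ S_{t−s}(F(Y_{⌊s⌋_h}(ω), O_{⌊s⌋_h}(ω))) ds + O_t(ω)`.
Then `Y` is a stochastic process and `Y − O` is a stochastic process all of whose sample
paths are right-continuous. -/
theorem recursive_scheme_measurable_and_right_continuous
    {V : Type*} [NormedAddCommGroup V] [NormedSpace ℝ V] [CompleteSpace V]
    [TopologicalSpace.SeparableSpace V] [MeasurableSpace V] [BorelSpace V]
    {Ω : Type*} [MeasurableSpace Ω] (P : Measure Ω) [IsProbabilityMeasure P]
    (T h : ℝ) (hT : 0 < T) (hh : 0 < h)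
    (S : ℝ → V →L[ℝ] V)
    (hS0 : S 0 = ContinuousLinearMap.id ℝ V)
    (hSadd : ∀ t s : ℝ, 0 ≤ t → 0 ≤ s → S (t + s) = (S t).comp (S s))
    (hScont : ∀ v : V, ContinuousOn (fun t => S t v) (Set.Ici (0:ℝ)))
    (hSbdd : ∃ C : ℝ, ∀ s ∈ Set.Icc (0:ℝ) T, ‖S s‖ ≤ C)
    (O : ℝ → Ω → V) (hO : ∀ t ∈ Set.Icc (0:ℝ) T, Measurable (O t))
    (F : V × V → V) (hF : Measurable F)
    (Y : ℝ → Ω → V)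
    (hY : ∀ ω : Ω, ∀ t ∈ Set.Icc (0:ℝ) T,
      Y t ω = (∫ s in (0:ℝ)..t,
          S (t - s) (F (Y (h * (⌊s / h⌋ : ℝ)) ω, O (h * (⌊s / h⌋ : ℝ)) ω))) + O t ω) :
    (∀ t ∈ Set.Icc (0:ℝ) T, Measurable (Y t)) ∧
    (∀ t ∈ Set.Icc (0:ℝ) T, Measurable (fun ω => Y t ω - O t ω)) ∧
    (∀ ω : Ω, ∀ t ∈ Set.Ico (0:ℝ) T,
      Filter.Tendsto (fun u => Y u ω - O u ω) (nhdsWithin t (Set.Ioi t))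
        (nhds (Y t ω - O t ω))) := by
  have : SecondCountableTopology V := UniformSpace.secondCountable_of_separable V
  let x : ℤ → Ω → V := fun k ω => F (Y (h * (k : ℝ)) ω, O (h * (k : ℝ)) ω)
  have hdiff : ∀ ω, ∀ t ∈ Set.Icc (0:ℝ) T,
      Y t ω - O t ω = ∫ s in (0:ℝ)..t, S (t - s) (x ⌊s / h⌋ ω) := by
    intro ω t ht
    rw [hY ω t ht, add_sub_cancel_right]
  have hstep : ∀ t ∈ Set.Icc (0:ℝ) T,
      (∀ k : ℤ, 0 ≤ k → h * (k : ℝ) < t → Measurable (Y (h * (k : ℝ)))) → Measurable (Y t) := by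
    intro t ht H
    have hx : ∀ k : ℤ, 0 ≤ k → h * (k : ℝ) < t → Measurable (x k) := fun k hk hkt =>
      hF.comp ((H k hk hkt).prodMk (hO _
        ⟨mul_nonneg hh.le (Int.cast_nonneg hk), hkt.le.trans ht.2⟩))
    convert (measurable_convolution hh hScont ht.1 x hx).add (hO t ht) using 1
    exact funext fun ω => hY ω t ht
  have hind : ∀ n : ℕ, ∀ t ∈ Set.Icc (0:ℝ) T, t ≤ h * (n : ℝ) → Measurable (Y t) := by
    intro n
    induction n with
    | zero =>
      intro t ht htn
      refine hstep t ht fun k hk hkt => absurd hkt (not_lt.2 ?_)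
      have : (0:ℝ) ≤ h * (k : ℝ) := mul_nonneg hh.le (Int.cast_nonneg hk)
      simp only [Nat.cast_zero, mul_zero] at htn
      linarith
    | succ n ih =>
      intro t ht htn
      refine hstep t ht fun k hk hkt => ih _
        ⟨mul_nonneg hh.le (Int.cast_nonneg hk), hkt.le.trans ht.2⟩ ?_
      have h1 : (k : ℝ) < ((n + 1 : ℕ) : ℝ) := lt_of_mul_lt_mul_left (hkt.trans_le htn) hh.le
      have h2 : k < ((n + 1 : ℕ) : ℤ) := by exact_mod_cast h1
      have h3 : k ≤ (n : ℤ) := by push_cast at h2; omega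
      exact mul_le_mul_of_nonneg_left (by exact_mod_cast h3) hh.le
  have hmeas : ∀ t ∈ Set.Icc (0:ℝ) T, Measurable (Y t) := by
    intro t ht
    obtain ⟨n, hn⟩ := exists_nat_ge (t / h)
    exact hind n t ht (by rwa [div_le_iff₀' hh] at hn)
  refine ⟨hmeas, fun t ht => (hmeas t ht).sub (hO t ht), fun ω t ht => ?_⟩
  rw [hdiff ω t ⟨ht.1, ht.2.le⟩]
  refine (tendsto_convolution hh hScont hSbdd (fun k => x k ω) ht).congr' ?_
  filter_upwards [Ioo_mem_nhdsGT ht.2] with u hu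
  exact (hdiff ω u ⟨ht.1.trans hu.1.le, hu.2.le⟩).symm
end

section
/- Quantitative exponential integrability via Fernique's theorem (Lemma 5.4): Let (V,‖·‖_V) be a separable real Banach space, let (Ω,F,P) be a probability space, let X : Ω → V be a measurable map such that for every continuous linear functional φ : V → ℝ the real random variable φ∘X is a centered Gaussian random variable (i.e., the law of φ∘X is a centered Gaussian measure on ℝ, possibly degenerate), and let r ∈ (0,∞) satisfy P(‖X‖_V² > r) ≤ 1/10. Then E[ exp( ‖X‖_V² / (18r) ) ] ≤ √e + Σ_{k=0}^∞ (e/3)^{2^k}, and moreover √e + Σ_{k=0}^∞ (e/3)^{2^k} < 13. -/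
/-!
The law `μ` of `X` is a centered Gaussian measure, so `μ ⊗ μ` is invariant under the rotation of
angle `-π/4` (characteristic functions). Fernique's argument then bounds the tails along the
thresholds `t 0 = a`, `t (n + 1) = √2 * t n + a` with `a = √r`: since `μ {‖x‖ ≤ a} ≥ 9/10`,
one gets `μ {t n < ‖x‖} ≤ (1/9) ^ 2 ^ n` (`measure_gt_normThreshold_le_ninth_pow`). On the annulus
`t n < ‖x‖ ≤ t (n + 1)` the integrand is at most `exp (2 * 2 ^ n)`, because `(1 + √2) ^ 2 ≤ 9`,
so this annulus contributes at most `(e² / 9) ^ 2 ^ n ≤ (e / 3) ^ 2 ^ n`, while the ball of radius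
`a` contributes at most `exp (1 / 18) ≤ √e`. See `lintegral_exp_le_of_rotation`.

The rotation invariance is available in complete spaces only, and `V` is not assumed complete:
`X` is composed with the isometric embedding of `V` into its completion, which changes neither the
norms nor the Gaussian hypothesis.

The numerical bound follows from `2 ^ k ≥ k + 1` and the geometric series with ratio `e / 3`.
-/

open MeasureTheory ProbabilityTheory ENNReal

open ProbabilityTheory.Fernique in
lemma measure_gt_normThreshold_le_ninth_pow {E : Type*} [NormedAddCommGroup E] [NormedSpace ℝ E]
    [SecondCountableTopology E] [MeasurableSpace E] [BorelSpace E]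
    (μ : Measure E) [IsProbabilityMeasure μ]
    (h_rot : (μ.prod μ).map (ContinuousLinearMap.rotation (-(Real.pi / 4))) = μ.prod μ)
    {a : ℝ} (h10 : μ {x | a < ‖x‖} ≤ 1 / 10) (n : ℕ) :
    μ {x | normThreshold a n < ‖x‖} ≤ ENNReal.ofReal ((1 / 9) ^ 2 ^ n) := by
  have hmeas : MeasurableSet {x : E | a < ‖x‖} := measurableSet_lt (by fun_prop) (by fun_prop)
  have hc : μ {x | ‖x‖ ≤ a} = 1 - μ {x | a < ‖x‖} := by
    rw [← prob_compl_eq_one_sub hmeas]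
    congr 1
    ext x
    simp
  have hone : 1 - μ {x | ‖x‖ ≤ a} = μ {x | a < ‖x‖} := by
    rw [hc, ENNReal.sub_sub_cancel (by simp) prob_le_one]
  have hten : (1 / 10 : ℝ≥0∞) = ENNReal.ofReal (1 / 10) := by
    rw [ENNReal.ofReal_div_of_pos (by norm_num)]; simp
  have hc_ge : ENNReal.ofReal (9 / 10) ≤ μ {x | ‖x‖ ≤ a} := by
    rw [hc, show (9 / 10 : ℝ) = 1 - 1 / 10 by norm_num, ENNReal.ofReal_sub _ (by norm_num),
      ← hten, ENNReal.ofReal_one]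
    gcongr
  have hc_gt : 2⁻¹ < μ {x | ‖x‖ ≤ a} := by
    refine lt_of_lt_of_le ?_ hc_ge
    rw [show (2⁻¹ : ℝ≥0∞) = ENNReal.ofReal 2⁻¹ by
      rw [ENNReal.ofReal_inv_of_pos (by norm_num)]; simp]
    exact (ENNReal.ofReal_lt_ofReal_iff (by norm_num)).2 (by norm_num)
  refine (measure_gt_normThreshold_le_rpow h_rot hc_gt n).trans ?_
  rw [hone]
  calc μ {x | ‖x‖ ≤ a} * (μ {x | a < ‖x‖} / μ {x | ‖x‖ ≤ a}) ^ 2 ^ n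
    _ ≤ 1 * (ENNReal.ofReal (1 / 10) / ENNReal.ofReal (9 / 10)) ^ 2 ^ n := by
        gcongr
        · exact prob_le_one
        · exact h10.trans hten.le
    _ = ENNReal.ofReal ((1 / 9) ^ 2 ^ n) := by
        rw [one_mul, ← ENNReal.ofReal_div_of_pos (by norm_num), ← ENNReal.ofReal_pow (by norm_num)]
        norm_num

lemma exp_one_div_three_lt : Real.exp 1 / 3 < 0.907 := by
  have := Real.exp_one_lt_d9
  linarith

lemma pow_two_pow_le_geometric (k : ℕ) :
    (Real.exp 1 / 3) ^ (2 ^ k) ≤ Real.exp 1 / 3 * (Real.exp 1 / 3) ^ k := by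
  rw [← pow_succ']
  exact pow_le_pow_of_le_one (by positivity) (by linarith [exp_one_div_three_lt])
    (Nat.lt_two_pow_self)

lemma summable_geometric_exp :
    Summable fun k : ℕ => Real.exp 1 / 3 * (Real.exp 1 / 3) ^ k :=
  (summable_geometric_of_lt_one (by positivity) (by linarith [exp_one_div_three_lt])).mul_left _

lemma summable_pow_two_pow : Summable fun k : ℕ => (Real.exp 1 / 3) ^ (2 ^ k) :=
  Summable.of_nonneg_of_le (fun _ => by positivity) pow_two_pow_le_geometric summable_geometric_exp

lemma sqrt_exp_add_tsum_lt :
    Real.sqrt (Real.exp 1) + (∑' k : ℕ, (Real.exp 1 / 3) ^ (2 ^ k)) < 13 := by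
  have hq := exp_one_div_three_lt
  have h1 : (∑' k : ℕ, (Real.exp 1 / 3) ^ (2 ^ k)) ≤ 0.907 * (1 - 0.907)⁻¹ := by
    refine (summable_pow_two_pow.tsum_le_tsum pow_two_pow_le_geometric
      summable_geometric_exp).trans ?_
    rw [tsum_mul_left, tsum_geometric_of_lt_one (by positivity) (by linarith)]
    have hpos : (0 : ℝ) ≤ (1 - Real.exp 1 / 3)⁻¹ := inv_nonneg.2 (by linarith)
    gcongr
  have h2 : Real.sqrt (Real.exp 1) ≤ 2 := by
    rw [Real.sqrt_le_left (by norm_num)]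
    linarith
  norm_num at h1
  linarith

open ProbabilityTheory.Fernique in
/-- The integral bound for a measure whose square is rotation invariant. -/
lemma lintegral_exp_le_of_rotation {E : Type*} [NormedAddCommGroup E] [NormedSpace ℝ E]
    [SecondCountableTopology E] [MeasurableSpace E] [BorelSpace E]
    (μ : Measure E) [IsProbabilityMeasure μ]
    (h_rot : (μ.prod μ).map (ContinuousLinearMap.rotation (-(Real.pi / 4))) = μ.prod μ)
    {a : ℝ} (ha : 0 < a) (h10 : μ {x | a < ‖x‖} ≤ 1 / 10) :
    ∫⁻ x, ENNReal.ofReal (Real.exp (‖x‖ ^ 2 / (18 * a ^ 2))) ∂μ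
      ≤ ENNReal.ofReal (Real.sqrt (Real.exp 1) + ∑' k : ℕ, (Real.exp 1 / 3) ^ (2 ^ k)) := by
  set t := normThreshold a with ht
  have hms (n : ℕ) : MeasurableSet {x : E | t n < ‖x‖} :=
    measurableSet_lt (by fun_prop) (by fun_prop)
  -- On the `n`-th annulus the integrand is at most its value at the outer radius.
  have hexp (n : ℕ) (x : E) (hx : ‖x‖ ≤ t (n + 1)) :
      Real.exp (‖x‖ ^ 2 / (18 * a ^ 2)) ≤ Real.exp 2 ^ 2 ^ n := by
    rw [← Real.exp_nat_mul]
    gcongr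
    rw [div_le_iff₀ (by positivity)]
    have h1 : ‖x‖ ^ 2 ≤ t (n + 1) ^ 2 := by gcongr
    have h2 := sq_normThreshold_add_one_le (a := a) n
    have h3 : (1 + √2) ^ 2 ≤ 9 := by
      nlinarith [Real.sq_sqrt (show (0 : ℝ) ≤ 2 by norm_num), Real.sqrt_nonneg 2]
    calc ‖x‖ ^ 2 ≤ a ^ 2 * (1 + √2) ^ 2 * 2 ^ (n + 2) := h1.trans h2
      _ ≤ a ^ 2 * 9 * 2 ^ (n + 2) := by gcongr
      _ = _ := by push_cast; ring
  have hsqrt : Real.sqrt (Real.exp 1) = Real.exp (1 / 2) := by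
    rw [Real.exp_half]
  -- Each point beyond radius `a` is charged to the indicator of its own annulus.
  have hpt (x : E) : ENNReal.ofReal (Real.exp (‖x‖ ^ 2 / (18 * a ^ 2)))
      ≤ ENNReal.ofReal (Real.sqrt (Real.exp 1))
        + ∑' n, {x : E | t n < ‖x‖}.indicator
            (fun _ => ENNReal.ofReal (Real.exp 2 ^ 2 ^ n)) x := by
    rcases le_or_gt ‖x‖ a with hx | hx
    · refine le_add_right ?_
      rw [hsqrt]
      refine ENNReal.ofReal_le_ofReal (Real.exp_le_exp.2 ?_)
      rw [div_le_iff₀ (by positivity)]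
      have : ‖x‖ ^ 2 ≤ a ^ 2 := by gcongr
      nlinarith
    · obtain ⟨n, hn1, hn2⟩ := (normThreshold_strictMono ha).exists_between_of_tendsto_atTop
        (tendsto_normThreshold_atTop ha) hx
      refine le_add_left (le_trans ?_ (ENNReal.le_tsum n))
      rw [Set.indicator_of_mem (by exact hn1)]
      exact ENNReal.ofReal_le_ofReal (hexp n x hn2)
  calc ∫⁻ x, ENNReal.ofReal (Real.exp (‖x‖ ^ 2 / (18 * a ^ 2))) ∂μ
    _ ≤ ∫⁻ x, (ENNReal.ofReal (Real.sqrt (Real.exp 1))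
        + ∑' n, {x : E | t n < ‖x‖}.indicator
            (fun _ => ENNReal.ofReal (Real.exp 2 ^ 2 ^ n)) x) ∂μ := lintegral_mono hpt
    _ = ENNReal.ofReal (Real.sqrt (Real.exp 1))
        + ∑' n, ENNReal.ofReal (Real.exp 2 ^ 2 ^ n) * μ {x | t n < ‖x‖} := by
      rw [lintegral_add_left measurable_const, lintegral_const, measure_univ, mul_one,
        lintegral_tsum fun n => (measurable_const.indicator (hms n)).aemeasurable]
      congr 2 with n
      rw [lintegral_indicator_const (hms n)]
    _ ≤ ENNReal.ofReal (Real.sqrt (Real.exp 1))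
        + ∑' n : ℕ, ENNReal.ofReal ((Real.exp 1 / 3) ^ 2 ^ n) := by
      gcongr with n
      refine (mul_le_mul_right
        (measure_gt_normThreshold_le_ninth_pow μ h_rot h10 n) _).trans ?_
      rw [← ENNReal.ofReal_mul (by positivity), ← mul_pow]
      gcongr
      -- `e² / 9 = (e / 3)² ≤ e / 3`
      have h2 : Real.exp 2 = Real.exp 1 * Real.exp 1 := by rw [← Real.exp_add]; norm_num
      rw [h2]
      nlinarith [exp_one_div_three_lt, Real.exp_pos 1]
    _ = _ := by
      rw [← ENNReal.ofReal_tsum_of_nonneg (fun _ => by positivity) summable_pow_two_pow,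
        ← ENNReal.ofReal_add (by positivity) (tsum_nonneg fun _ => by positivity)]

/-- **Quantitative exponential integrability via Fernique's theorem (Lemma 5.4).**
If `X : Ω → V` is a Gaussian random vector in a separable Banach space `V`
(every continuous linear functional of `X` is a centered real Gaussian) and
`P(‖X‖² > r) ≤ 1/10`, then `E[exp(‖X‖²/(18r))] ≤ √e + Σ_{k≥0} (e/3)^{2^k} < 13`. -/
theorem fernique_quantitative
    {V : Type*} [NormedAddCommGroup V] [NormedSpace ℝ V]
    [TopologicalSpace.SeparableSpace V] [MeasurableSpace V] [BorelSpace V]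
    {Ω : Type*} [MeasurableSpace Ω] (P : Measure Ω) [IsProbabilityMeasure P]
    (X : Ω → V) (hX : Measurable X)
    (hGauss : ∀ φ : V →L[ℝ] ℝ, ∃ σ2 : NNReal,
      P.map (fun ω => φ (X ω)) = gaussianReal 0 σ2)
    (r : ℝ) (hr : 0 < r)
    (h10 : P {ω | r < ‖X ω‖ ^ 2} ≤ 1 / 10) :
    (∫⁻ ω, ENNReal.ofReal (Real.exp (‖X ω‖ ^ 2 / (18 * r))) ∂P
        ≤ ENNReal.ofReal (Real.sqrt (Real.exp 1) + ∑' k : ℕ, (Real.exp 1 / 3) ^ (2 ^ k)))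
      ∧ Real.sqrt (Real.exp 1) + (∑' k : ℕ, (Real.exp 1 / 3) ^ (2 ^ k)) < 13 := by
  refine ⟨?_, sqrt_exp_add_tsum_lt⟩
  let E := UniformSpace.Completion V
  let _ : MeasurableSpace E := borel E
  have : BorelSpace E := ⟨rfl⟩
  have : SecondCountableTopology E := UniformSpace.secondCountable_of_separable E
  let ι : V →L[ℝ] E := UniformSpace.Completion.toComplL
  have hι (v : V) : ‖ι v‖ = ‖v‖ := UniformSpace.Completion.norm_coe v
  have hY : Measurable fun ω => ι (X ω) := ι.continuous.measurable.comp hX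
  let μ : Measure E := P.map fun ω => ι (X ω)
  have : IsProbabilityMeasure μ := Measure.isProbabilityMeasure_map hY.aemeasurable
  have hmap (L : StrongDual ℝ E) : ∃ v : NNReal, μ.map L = gaussianReal 0 v := by
    obtain ⟨v, hv⟩ := hGauss (L.comp ι)
    exact ⟨v, by rw [← hv, Measure.map_map (by fun_prop) hY]; rfl⟩
  have hG : IsGaussian μ := isGaussian_of_map_eq_gaussianReal fun L =>
    let ⟨v, hv⟩ := hmap L; ⟨0, v, hv⟩
  have hcent (L : StrongDual ℝ E) : μ[L] = 0 := by
    obtain ⟨v, hv⟩ := hmap L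
    have h0 : ∫ y, y ∂(μ.map L) = 0 := by rw [hv, integral_id_gaussianReal]
    rwa [integral_map (by fun_prop) (by fun_prop)] at h0
  have hrot := IsGaussian.map_rotation_eq_self_of_forall_strongDual_eq_zero hcent
    (-(Real.pi / 4))
  have hsq : √r ^ 2 = r := Real.sq_sqrt hr.le
  have hball : μ {x | √r < ‖x‖} ≤ 1 / 10 := by
    rw [Measure.map_apply hY (measurableSet_lt (by fun_prop) (by fun_prop))]
    refine (measure_mono fun ω hω => ?_).trans h10
    simp only [Set.mem_preimage, Set.mem_ofPred_eq, hι] at hω ⊢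
    exact (Real.sqrt_lt' (lt_of_le_of_lt (Real.sqrt_nonneg r) hω)).1 hω
  have key := lintegral_exp_le_of_rotation μ hrot (Real.sqrt_pos.2 hr) hball
  rw [lintegral_map (by fun_prop) hY] at key
  simpa only [hι, hsq] using key
end

section
/- Coercivity estimate for the Kuramoto-Sivashinsky nonlinearity (key inequality in the proof of Lemma 5.2): Let η ∈ (0,∞), κ ∈ ℝ, ε ∈ (0,∞), and let v, w : ℝ → ℝ be continuously differentiable 1-periodic functions (v(x+1) = v(x) and w(x+1) = w(x) for all x ∈ ℝ). Then ∫₀¹ v(x)·( η·(v(x)+w(x)) − (κ/2)·d/dx[(v+w)²](x) ) dx ≤ (3η/2)·∫₀¹ v(x)² dx + (η/2)·∫₀¹ w(x)² dx + κ²·(1/(4ε) + 1/4)·∫₀¹ (v'(x))² dx + ε·( ∫₀¹ v(x)² dx )·( sup_{x∈(0,1)} |w(x)|² ) + (1/4)·∫₀¹ w(x)⁴ dx. -/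
/-!
Since `v` and `w` are `1`-periodic, integration by parts and `∫ v² v' = 0` turn the nonlinear term
`-κ ∫ v (v + w) (v' + w')` into `κ ∫ v v' w + (κ / 2) ∫ v' w²`. Equivalently, the two integrands
differ by the derivative of the periodic function `G = -(κ / 2) v (v + w)² + (κ / 6) v³`, whose
integral over a period vanishes. The remaining terms are bounded pointwise on `(0, 1)` by Young's
inequality, together with `w² ≤ sup |w|²`:
`η v w ≤ (η / 2) (v² + w²)`, `κ v v' w ≤ κ² v'² / (4 ε) + ε v² w²` and
`(κ / 2) v' w² ≤ κ² v'² / 4 + w⁴ / 4`.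
-/

open Real

/-- The pointwise form of the estimate, with `a, b, p` the values of `v, w, v'`, and `S` an upper
bound for `w²`. -/
lemma ks_pointwise (η κ ε a b p S : ℝ) (hη : 0 < η) (hε : 0 < ε) (hS : b ^ 2 ≤ S) :
    η * a * (a + b) + κ * p * a * b + κ / 2 * p * b ^ 2
      ≤ 3 * η / 2 * a ^ 2 + η / 2 * b ^ 2 + κ ^ 2 * (1 / (4 * ε) + 1 / 4) * p ^ 2
        + ε * S * a ^ 2 + 1 / 4 * b ^ 4 := by
  have h1 : η * (a * b) ≤ η * ((a ^ 2 + b ^ 2) / 2) :=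
    mul_le_mul_of_nonneg_left (by nlinarith [sq_nonneg (a - b)]) hη.le
  have h2 : κ * p * a * b ≤ κ ^ 2 * (1 / (4 * ε)) * p ^ 2 + ε * a ^ 2 * b ^ 2 := by
    have key : κ ^ 2 * (1 / (4 * ε)) * p ^ 2 + ε * a ^ 2 * b ^ 2 - κ * p * a * b
        = (κ * p - 2 * ε * a * b) ^ 2 / (4 * ε) := by
      field_simp
      ring
    have : 0 ≤ (κ * p - 2 * ε * a * b) ^ 2 / (4 * ε) := by positivity
    linarith
  have h3 : κ / 2 * p * b ^ 2 ≤ κ ^ 2 * (1 / 4) * p ^ 2 + 1 / 4 * b ^ 4 := by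
    nlinarith [sq_nonneg (κ * p - b ^ 2)]
  have h4 : ε * a ^ 2 * b ^ 2 ≤ ε * a ^ 2 * S := mul_le_mul_of_nonneg_left hS (by positivity)
  linarith

/-- **Coercivity estimate for the Kuramoto–Sivashinsky nonlinearity (Lemma 5.2, key inequality).**
For continuously differentiable `1`-periodic `v, w : ℝ → ℝ` (with derivatives `v', w'`),
`η > 0`, `κ ∈ ℝ`, `ε > 0`:
`∫₀¹ v·(η(v+w) − (κ/2)((v+w)²)') ≤ (3η/2)∫v² + (η/2)∫w² + κ²(1/(4ε)+1/4)∫(v')²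
  + ε (∫v²)·sup_{(0,1)}|w|² + (1/4)∫w⁴`. -/
theorem ks_coercivity (η κ ε : ℝ) (hη : 0 < η) (hε : 0 < ε)
    (v w v' w' : ℝ → ℝ)
    (hv : ∀ x, HasDerivAt v (v' x) x) (hw : ∀ x, HasDerivAt w (w' x) x)
    (hv' : Continuous v') (hw' : Continuous w')
    (hvper : Function.Periodic v 1) (hwper : Function.Periodic w 1) :
    (∫ x in (0:ℝ)..1, v x * (η * (v x + w x) - κ / 2 * (2 * (v x + w x) * (v' x + w' x))))
      ≤ 3 * η / 2 * (∫ x in (0:ℝ)..1, v x ^ 2)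
        + η / 2 * (∫ x in (0:ℝ)..1, w x ^ 2)
        + κ ^ 2 * (1 / (4 * ε) + 1 / 4) * (∫ x in (0:ℝ)..1, v' x ^ 2)
        + ε * (∫ x in (0:ℝ)..1, v x ^ 2) * (⨆ x : Set.Ioo (0:ℝ) 1, |w (x : ℝ)| ^ 2)
        + 1 / 4 * (∫ x in (0:ℝ)..1, w x ^ 4) := by
  have cv : Continuous v := continuous_iff_continuousAt.2 fun x => (hv x).continuousAt
  have cw : Continuous w := continuous_iff_continuousAt.2 fun x => (hw x).continuousAt
  set S : ℝ := ⨆ x : Set.Ioo (0:ℝ) 1, |w (x : ℝ)| ^ 2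
  have hbdd : BddAbove (Set.range fun x : Set.Ioo (0:ℝ) 1 => |w (x : ℝ)| ^ 2) := by
    obtain ⟨C, hC⟩ := (isCompact_Icc (a := (0:ℝ)) (b := 1)).bddAbove_image
      (f := fun x => |w x| ^ 2) (by fun_prop)
    refine ⟨C, ?_⟩
    rintro _ ⟨x, rfl⟩
    exact hC ⟨x, Set.Ioo_subset_Icc_self x.2, rfl⟩
  have hS : ∀ x ∈ Set.Ioo (0:ℝ) 1, w x ^ 2 ≤ S := fun x hx => by
    rw [← sq_abs]
    exact le_ciSup hbdd ⟨x, hx⟩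
  -- `g` is the derivative of the periodic function `G`, so its integral over a period is zero.
  let G : ℝ → ℝ := fun x => -(κ / 2) * (v x * (v x + w x) ^ 2) + κ / 6 * v x ^ 3
  let g : ℝ → ℝ := fun x => -(κ / 2) * (v' x * (v x + w x) ^ 2
    + v x * (2 * (v x + w x) * (v' x + w' x))) + κ / 2 * (v x ^ 2 * v' x)
  have cg : Continuous g := by fun_prop
  have hG : ∀ x, HasDerivAt G (g x) x := fun x => by
    have h := (((hv x).mul (((hv x).add (hw x)).pow 2)).const_mul (-(κ / 2))).add
      (((hv x).pow 3).const_mul (κ / 6))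
    refine h.congr_deriv ?_
    simp only [g, Pi.add_apply, Pi.pow_apply]
    push_cast
    ring
  have hg0 : ∫ x in (0:ℝ)..1, g x = 0 := by
    rw [intervalIntegral.integral_eq_sub_of_hasDerivAt (fun x _ => hG x)
      (cg.intervalIntegrable _ _)]
    have h1 : v 1 = v 0 := by simpa using hvper 0
    have h2 : w 1 = w 0 := by simpa using hwper 0
    simp only [G, h1, h2, sub_self]
  have hmono : (∫ x in (0:ℝ)..1,
        v x * (η * (v x + w x) - κ / 2 * (2 * (v x + w x) * (v' x + w' x))))
      ≤ ∫ x in (0:ℝ)..1, (g x + (3 * η / 2 * v x ^ 2 + η / 2 * w x ^ 2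
        + κ ^ 2 * (1 / (4 * ε) + 1 / 4) * v' x ^ 2 + ε * S * v x ^ 2 + 1 / 4 * w x ^ 4)) := by
    refine intervalIntegral.integral_mono_on_of_le_Ioo zero_le_one
      (Continuous.intervalIntegrable (by fun_prop) _ _)
      (Continuous.intervalIntegrable (by fun_prop) _ _) fun x hx => ?_
    have h := ks_pointwise η κ ε (v x) (w x) (v' x) S hη hε (hS x hx)
    refine le_trans (le_of_eq ?_) (add_le_add_right h (g x))
    simp only [g]
    ring
  refine hmono.trans (le_of_eq ?_)
  have i1 : ∀ {f : ℝ → ℝ}, Continuous f → IntervalIntegrable f MeasureTheory.volume 0 1 :=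
    fun h => h.intervalIntegrable _ _
  rw [intervalIntegral.integral_add (i1 cg) (i1 (by fun_prop)), hg0,
    intervalIntegral.integral_add (i1 (by fun_prop)) (i1 (by fun_prop)),
    intervalIntegral.integral_add (i1 (by fun_prop)) (i1 (by fun_prop)),
    intervalIntegral.integral_add (i1 (by fun_prop)) (i1 (by fun_prop)),
    intervalIntegral.integral_add (i1 (by fun_prop)) (i1 (by fun_prop))]
  simp only [intervalIntegral.integral_const_mul]
  ring
end
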